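/- arXiv:math/0011270 — 5 statements merged into one kernel-verified Lean document; each statement's English description precedes it below -/
import Mathlib

section
/- Let ℓ be a prime, q a power of ℓ, and V a vector space of dimension 2n over F_q with a nondegenerate alternating bilinear form. Suppose a finite ℓ-group H acts F_q-linearly on V preserving the form (e(hv, hw) = e(v,w) for all h ∈ H, v, w ∈ V). Then there exists a maximal isotropic subspace W of V (W = W^⊥) that is stable under the action of H. -/
/-!
By Zorn's lemma there is a maximal `W` among the stable isotropic submodules. If `W ≠ W^⊥`, take
`v ∈ W^⊥ \ W`. The orbit of `v` generates a nonzero finite `ℓ`-subgroup of `W^⊥ / W`, on which the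
`ℓ`-group `H` acts; the number of fixed points is divisible by `ℓ`, and `0` is one of them, so there
is a nonzero one. If `x ∈ W^⊥` lifts it, then `W + F x` is stable, and it is isotropic because the
form is alternating, contradicting maximality.
-/

theorem finite_addSubgroupClosure_of_isOfFinAddOrder {M : Type*} [AddCommGroup M] {s : Set M}
    (hs : s.Finite) (htors : ∀ x ∈ s, IsOfFinAddOrder x) : Finite (AddSubgroup.closure s) := by
  have : AddGroup.FG (AddSubgroup.closure s) :=
    (AddGroup.fg_iff_addSubgroup_fg _).2 ⟨hs.toFinset, by rw [hs.coe_toFinset]⟩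
  have le_torsion : AddSubgroup.closure s ≤ AddCommGroup.torsion M :=
    (AddSubgroup.closure_le _).2 htors
  exact AddCommGroup.finite_of_fg_isAddTorsion _ fun x =>
    AddSubmonoid.isOfFinAddOrder_coe.1 (le_torsion x.2)

theorem exists_mem_closure_orbit_ne_zero_forall_smul_eq {p k : ℕ} [Fact p.Prime] {G M : Type*}
    [Group G] [AddCommGroup M] [DistribMulAction G M] (hG : IsPGroup p G) {v : M} (hv : v ≠ 0)
    (hpv : p ^ k • v = 0) (hfin : (MulAction.orbit G v).Finite) :
    ∃ x ∈ AddSubgroup.closure (MulAction.orbit G v), x ≠ 0 ∧ ∀ g : G, g • x = x := by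
  let S := AddSubgroup.closure (MulAction.orbit G v)
  have hvS : v ∈ S := AddSubgroup.subset_closure (MulAction.mem_orbit_self v)
  have smul_mem (g : G) : S ≤ S.comap (DistribSMul.toAddMonoidHom M g) :=
    (AddSubgroup.closure_le _).2 fun _ hw =>
      AddSubgroup.subset_closure (MulAction.mem_orbit_of_mem_orbit g hw)
  have : Finite S := by
    refine finite_addSubgroupClosure_of_isOfFinAddOrder hfin ?_
    rintro _ ⟨g, rfl⟩
    refine isOfFinAddOrder_iff_nsmul_eq_zero.2 ⟨p ^ k, pow_pos (Fact.out : p.Prime).pos k, ?_⟩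
    change p ^ k • g • v = 0
    rw [smul_comm, hpv, smul_zero]
  have dvd_card : p ∣ Nat.card S := by
    obtain ⟨j, hj⟩ := exists_addOrderOf_eq_prime_pow_iff.2 ⟨k, hpv⟩
    have hj0 : j ≠ 0 := by
      rintro rfl
      exact hv (AddMonoid.addOrderOf_eq_one_iff.1 hj)
    exact (hj ▸ dvd_pow_self p hj0).trans (S.addOrderOf_dvd_natCard hvS)
  let T : SubMulAction G M := ⟨S, fun g _ hw => smul_mem g hw⟩
  obtain ⟨x, hx, hx0⟩ :=
    hG.exists_fixed_point_of_prime_dvd_card_of_fixed_point T dvd_card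
      (a := ⟨0, S.zero_mem⟩) fun g => Subtype.ext (smul_zero g)
  exact ⟨x, x.2, fun h => hx0 (Subtype.ext h.symm), fun g => congrArg Subtype.val (hx g)⟩

section Representation

open Submodule

variable {R V N : Type*} [CommRing R] [AddCommGroup V] [Module R V] [AddCommGroup N] [Module R N]
  {B : V →ₗ[R] V →ₗ[R] N} {U W : Submodule R V} {v x : V}

theorem sup_span_singleton_le_orthogonalBilin (hB : B.IsAlt) (hW : W ≤ W.orthogonalBilin B)
    (hx : x ∈ W.orthogonalBilin B) : W ⊔ R ∙ x ≤ (W ⊔ R ∙ x).orthogonalBilin B := by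
  have le_orthogonal : W ⊔ R ∙ x ≤ W.orthogonalBilin B :=
    sup_le hW ((span_singleton_le_iff_mem x _).2 hx)
  have le_ker : W ⊔ R ∙ x ≤ LinearMap.ker (B.flip x) :=
    sup_le hx ((span_singleton_le_iff_mem x _).2 (hB x))
  refine sup_le (fun w hw y hy => ?_) ((span_singleton_le_iff_mem x _).2 fun y hy => le_ker hy)
  exact hB.eq_iff.1 (le_orthogonal hy w hw)

theorem sup_span_singleton_mem_invtSubmodule {G : Type*} [Monoid G] {ρ : Representation R G V}
    (hW : W ∈ ρ.invtSubmodule) (hx : ∀ g, ρ g x - x ∈ W) : W ⊔ R ∙ x ∈ ρ.invtSubmodule := by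
  rw [Representation.mem_invtSubmodule] at hW ⊢
  intro g
  rw [Module.End.mem_invtSubmodule]
  refine sup_le ((hW g).trans (comap_mono le_sup_left)) ?_
  rw [span_singleton_le_iff_mem, mem_comap, ← sub_add_cancel (ρ g x) x]
  exact add_mem_sup (hx g) (mem_span_singleton_self x)

theorem exists_maximal_isotropic_invtSubmodule {G : Type*} [Monoid G]
    (ρ : Representation R G V) (B : V →ₗ[R] V →ₗ[R] N) :
    ∃ W, Maximal (fun W => W ∈ ρ.invtSubmodule ∧ W ≤ W.orthogonalBilin B) W := by
  refine zorn_le₀ {W | W ∈ ρ.invtSubmodule ∧ W ≤ W.orthogonalBilin B} fun c hc hchain => ?_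
  refine ⟨sSup c, ⟨ρ.mem_invtSubmodule.2 fun g => ?_, ?_⟩, fun W hW => le_sSup hW⟩
  · rw [Module.End.mem_invtSubmodule]
    exact sSup_le fun W hW =>
      (ρ.mem_invtSubmodule.1 (hc hW).1 g).trans (comap_mono (le_sSup hW))
  · refine sSup_le fun W hW w hw z hz => ?_
    obtain ⟨W', hW', hz⟩ := (mem_sSup_of_directed ⟨W, hW⟩ hchain.directedOn).1 hz
    obtain h | h := hchain.total hW hW'
    · exact (hc hW').2 (h hw) z hz
    · exact (hc hW).2 hw z (h hz)

variable {G : Type*} [Group G] {ρ : Representation R G V}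

theorem exists_mem_notMem_forall_apply_sub_mem {p k : ℕ} [Fact p.Prime] (hG : IsPGroup p G)
    (hU : U ∈ ρ.invtSubmodule) (hW : W ∈ ρ.invtSubmodule) (hvU : v ∈ U) (hvW : v ∉ W)
    (hpv : p ^ k • v = 0) (hfin : (Set.range fun g => ρ g v).Finite) :
    ∃ x ∈ U, x ∉ W ∧ ∀ g, ρ g x - x ∈ W := by
  rw [Representation.mem_invtSubmodule] at hU hW
  let _ : DistribMulAction G (V ⧸ W) := DistribMulAction.compHom _ (ρ.quotient W hW)
  have orbit_eq : MulAction.orbit G (W.mkQ v) = W.mkQ '' Set.range fun g => ρ g v :=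
    Set.range_comp W.mkQ fun g => ρ g v
  have closure_le : AddSubgroup.closure (MulAction.orbit G (W.mkQ v)) ≤
      (U.map W.mkQ).toAddSubgroup := by
    rw [AddSubgroup.closure_le, orbit_eq]
    exact Set.image_mono (Set.range_subset_iff.2 fun g => hU g hvU)
  obtain ⟨y, hy, hy0, hfix⟩ := exists_mem_closure_orbit_ne_zero_forall_smul_eq hG
    (v := W.mkQ v) (by simpa using hvW) (by rw [← map_nsmul, hpv, map_zero])
    (orbit_eq ▸ hfin.image _)
  obtain ⟨x, hxU, rfl⟩ := closure_le hy
  exact ⟨x, hxU, by simpa using hy0, fun g => (Submodule.Quotient.eq W).1 (hfix g)⟩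

theorem orthogonalBilin_mem_invtSubmodule (hρ : ∀ g v w, B (ρ g v) (ρ g w) = B v w)
    (hW : W ∈ ρ.invtSubmodule) : W.orthogonalBilin B ∈ ρ.invtSubmodule := by
  rw [Representation.mem_invtSubmodule] at hW ⊢
  intro g v hv w hw
  calc B w (ρ g v) = B (ρ g (ρ g⁻¹ w)) (ρ g v) := by rw [ρ.self_inv_apply]
    _ = B (ρ g⁻¹ w) v := hρ g _ v
    _ = 0 := hv _ (hW g⁻¹ hw)

theorem exists_stable_maximal_isotropic_subspace_general {p : ℕ} [Fact p.Prime]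
    (hG : IsPGroup p G) (hV : ∀ v : V, ∃ k, p ^ k • v = 0)
    (hfin : ∀ v, (Set.range fun g => ρ g v).Finite) (hB : B.IsAlt)
    (hρ : ∀ g v w, B (ρ g v) (ρ g w) = B v w) :
    ∃ W ∈ ρ.invtSubmodule, W.orthogonalBilin B = W := by
  obtain ⟨W, ⟨hW, hiso⟩, hmax⟩ := exists_maximal_isotropic_invtSubmodule ρ B
  refine ⟨W, hW, le_antisymm (fun v hv => ?_) hiso⟩
  by_contra hvW
  obtain ⟨k, hpv⟩ := hV v
  obtain ⟨x, hx, hxW, hfix⟩ := exists_mem_notMem_forall_apply_sub_mem hG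
    (orthogonalBilin_mem_invtSubmodule hρ hW) hW hv hvW hpv (hfin v)
  have sup_le : W ⊔ R ∙ x ≤ W :=
    hmax ⟨sup_span_singleton_mem_invtSubmodule hW hfix,
      sup_span_singleton_le_orthogonalBilin hB hiso hx⟩ le_sup_left
  exact hxW (sup_le (mem_sup_right (mem_span_singleton_self x)))

end Representation

/-- If a finite `ℓ`-group `H` acts linearly on a symplectic space `V` of dimension `2n`
over a finite field of `ℓ`-power order, preserving the symplectic form, then there is a
maximal isotropic subspace of `V` stable under `H`. -/
theorem exists_stable_maximal_isotropic_subspace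
    (ℓ : ℕ) (hℓ : ℓ.Prime) (q n : ℕ) (hq : ∃ k : ℕ, 0 < k ∧ q = ℓ ^ k)
    (F : Type) [Field F] [Fintype F] (hF : Fintype.card F = q)
    (V : Type) [AddCommGroup V] [Module F V] [FiniteDimensional F V]
    (hdim : Module.finrank F V = 2 * n)
    (B : V →ₗ[F] V →ₗ[F] F)
    (halt : ∀ v : V, B v v = 0)
    (hnd : ∀ v : V, (∀ w : V, B v w = 0) → v = 0)
    (H : Type) [Group H] [Finite H] (hH : ∃ m : ℕ, Nat.card H = ℓ ^ m)
    (ρ : H →* (V ≃ₗ[F] V))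
    (hρ : ∀ (h : H) (v w : V), B (ρ h v) (ρ h w) = B v w) :
    ∃ W : Submodule F V,
      (W : Set V) = {v : V | ∀ w ∈ W, B v w = 0} ∧ ∀ (h : H), ∀ v ∈ W, ρ h v ∈ W := by
  obtain ⟨k, -, rfl⟩ := hq
  obtain ⟨m, hm⟩ := hH
  have : Fact ℓ.Prime := ⟨hℓ⟩
  have hV (v : V) : ℓ ^ k • v = 0 := by
    rw [← Nat.cast_smul_eq_nsmul F, ← hF, Nat.cast_card_eq_zero, zero_smul]
  have hB : B.IsAlt := halt
  obtain ⟨W, hW, hWorth⟩ := exists_stable_maximal_isotropic_subspace_general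
    (ρ := LinearEquiv.automorphismGroup.toLinearMapMonoidHom.comp ρ) (IsPGroup.of_card hm)
    (fun v => ⟨k, hV v⟩) (fun _ => Set.finite_range _) hB hρ
  rw [Representation.mem_invtSubmodule] at hW
  refine ⟨W, Set.ext fun v => ?_, hW⟩
  exact (SetLike.ext_iff.1 hWorth v).symm.trans (forall₂_congr fun _ _ => hB.eq_iff)
end

section
/- Let K be a number field that is a Galois extension of ℚ with abelian Galois group, and suppose every odd prime number is unramified in K (i.e., K/ℚ is unramified outside 2). Then the degree [K : ℚ] is a power of 2. In particular, there is no non-trivial abelian extension of ℚ of odd degree unramified outside 2. -/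
/-!
Let `F/ℚ` be Galois of odd degree `n` with a discriminant divisible by no prime other than `2`. The
different `𝔇` and the ideal `(2)` are Galois-invariant and supported at the primes above `2`, which
the Galois group permutes transitively, so one divides the other. As `1` has odd trace `n`, `(2)`
does not divide `𝔇`; hence `𝔇` properly divides `(2)` and `|discr F| = N(𝔇)` divides `2 ^ (n - 1)`.
Minkowski's bound then forces `n = 1`. Applied to the fixed field of a normal Sylow `2`-subgroup,
this shows that the Galois group is a `2`-group.
-/

open NumberField

open scoped Pointwise

section DifferentIdeal

variable {A B C : Type*} [CommRing A] [IsDomain A]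
  [CommRing B] [IsDedekindDomain B] [Algebra A B] [Module.IsTorsionFree A B]
  [CommRing C] [IsDedekindDomain C] [Algebra A C] [Module.IsTorsionFree A C]

attribute [local instance] FractionRing.liftAlgebra FractionRing.isScalarTower_liftAlgebra

lemma map_differentIdeal_le (e : B ≃ₐ[A] C) : (differentIdeal A B).map e ≤ differentIdeal A C := by
  let E : FractionRing B ≃ₐ[FractionRing A] FractionRing C :=
    IsFractionRing.fieldEquivOfAlgEquiv _ _ _ e
  have hE (b : B) : E (algebraMap B _ b) = algebraMap C _ (e b) :=
    IsFractionRing.fieldEquivOfAlgEquiv_algebraMap _ _ _ e b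
  refine Ideal.map_le_iff_le_comap.mpr fun x hx ↦ ?_
  simp only [differentIdeal, Ideal.mem_comap, Submodule.mem_comap,
    Submodule.mem_div_iff_forall_mul_mem, Submodule.mem_traceDual, Submodule.mem_one,
    Algebra.linearMap_apply, Algebra.traceForm_apply, RingHom.mem_range] at hx ⊢
  intro y hy
  have htrace (c : B) : Algebra.trace (FractionRing A) _ (E.symm y * algebraMap B _ c) =
      Algebra.trace (FractionRing A) _ (y * algebraMap C _ (e c)) := by
    rw [← Algebra.trace_eq_of_algEquiv E, map_mul E, E.apply_symm_apply, hE]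
  obtain ⟨b, hb⟩ := hx (E.symm y) (by
    rintro _ ⟨c, rfl⟩
    rw [htrace]
    exact hy _ ⟨e c, rfl⟩)
  exact ⟨e b, by rw [← hE, hb, map_mul E, hE, E.apply_symm_apply]⟩

lemma map_differentIdeal (e : B ≃ₐ[A] C) : (differentIdeal A B).map e = differentIdeal A C := by
  refine (map_differentIdeal_le e).antisymm fun x hx ↦ ?_
  rw [← e.apply_symm_apply x]
  exact Ideal.mem_map_of_mem e (map_differentIdeal_le e.symm (Ideal.mem_map_of_mem e.symm hx))

lemma smul_differentIdeal {G : Type*} [Group G] [MulSemiringAction G B] [SMulCommClass G A B]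
    (σ : G) : σ • differentIdeal A B = differentIdeal A B :=
  map_differentIdeal (MulSemiringAction.toAlgEquiv A B σ)

lemma not_map_dvd_differentIdeal_of_finrank_notMem {A B : Type*} [CommRing A]
    [IsDedekindDomain A] [CommRing B] [IsDedekindDomain B] [Algebra A B] [Module.IsTorsionFree A B]
    [Module.Finite A B] [Module.Free A B]
    [Algebra.IsSeparable (FractionRing A) (FractionRing B)] {p : Ideal A}
    (hp : (Module.finrank A B : A) ∉ p) : ¬ p.map (algebraMap A B) ∣ differentIdeal A B := by
  refine not_dvd_differentIdeal_of_intTrace_not_mem A _ ⊤ (Ideal.mul_top _) 1 trivial ?_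
  rw [Algebra.intTrace_eq_trace, ← map_one (algebraMap A B), Algebra.trace_algebraMap]
  simpa using hp

end DifferentIdeal

lemma smul_map_algebraMap {A B G : Type*} [CommRing A] [CommRing B] [Algebra A B]
    [Group G] [MulSemiringAction G B] [SMulCommClass G A B] (σ : G) (p : Ideal A) :
    σ • p.map (algebraMap A B) = p.map (algebraMap A B) := by
  rw [Ideal.pointwise_smul_def, Ideal.map_map]
  congr 1
  ext a
  exact smul_algebraMap σ a

lemma dvd_or_dvd_of_forall_smul_eq {A B : Type*} [CommRing A] [CommRing B] [IsDedekindDomain B]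
    [Algebra A B] (G : Type*) [Group G] [Finite G] [MulSemiringAction G B] [IsGaloisGroup G A B]
    {p : Ideal A} {I J : Ideal B} (hI : ∀ P, Prime P → P ∣ I → P.LiesOver p)
    (hJ : ∀ P, Prime P → P ∣ J → P.LiesOver p)
    (hGI : ∀ σ : G, σ • I = I) (hGJ : ∀ σ : G, σ • J = J) : I ∣ J ∨ J ∣ I := by
  by_contra! ⟨hIJ, hJI⟩
  have hI0 : I ≠ 0 := fun h ↦ hJI (h ▸ dvd_zero J)
  have hJ0 : J ≠ 0 := fun h ↦ hIJ (h ▸ dvd_zero I)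
  simp only [UniqueFactorizationMonoid.dvd_iff_emultiplicity_le hI0,
    UniqueFactorizationMonoid.dvd_iff_emultiplicity_le hJ0, not_forall, not_le] at hIJ hJI
  obtain ⟨P, hP, hPlt⟩ := hIJ
  obtain ⟨Q, hQ, hQlt⟩ := hJI
  have := Ideal.isPrime_of_prime hP
  have := Ideal.isPrime_of_prime hQ
  have := hI P hP (dvd_of_emultiplicity_pos (pos_of_gt hPlt))
  have := hJ Q hQ (dvd_of_emultiplicity_pos (pos_of_gt hQlt))
  obtain ⟨σ, rfl⟩ := Ideal.exists_smul_eq_of_isGaloisGroup p P Q G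
  have hσ (M : Ideal B) (hM : σ • M = M) : emultiplicity (σ • P) M = emultiplicity P M := by
    conv_lhs => rw [← hM]
    exact emultiplicity_map_eq (MulSemiringAction.toRingEquiv G (Ideal B) σ)
  rw [hσ I (hGI σ), hσ J (hGJ σ)] at hQlt
  exact hPlt.asymm hQlt

lemma map_span_natCast_int (R : Type*) [CommRing R] (n : ℕ) :
    (Ideal.span {(n : ℤ)}).map (algebraMap ℤ R) = Ideal.span {(n : R)} := by
  simp [Ideal.map_span]

section NumberField

variable {K : Type*} [Field K] [NumberField K]

lemma not_dvd_discr_of_squarefree {q : ℕ} (hq : q.Prime)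
    (h : Squarefree (Ideal.span {(q : 𝓞 K)})) : ¬ (q : ℤ) ∣ discr K := by
  classical
  have hqZ := Nat.prime_iff_prime_int.mp hq
  rw [not_dvd_discr_iff_forall_mem K (𝓞 K) hqZ]
  intro P hP hqP
  have : P.LiesOver (Ideal.span {(q : ℤ)}) := (Ideal.liesOver_span_iff hP.ne_top hqZ).mpr hqP
  have h0 : Ideal.span {(q : 𝓞 K)} ≠ ⊥ := by simpa using hq.ne_zero
  rw [← Ideal.ramificationIdx_eq_one_iff,
    Ideal.IsDedekindDomain.ramificationIdx_eq_normalizedFactors_count (.span {(q : ℤ)}) P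
      (map_span_natCast_int (𝓞 K) q ▸ h0), map_span_natCast_int]
  refine Multiset.count_eq_one_of_mem
    ((UniqueFactorizationMonoid.squarefree_iff_nodup_normalizedFactors h0).mp h) ?_
  rw [Ideal.mem_normalizedFactors_iff h0]
  exact ⟨hP, by simpa using hqP⟩

lemma not_span_dvd_differentIdeal_of_not_dvd_finrank {n : ℕ} (hn : ¬ n ∣ Module.finrank ℚ K) :
    ¬ Ideal.span {(n : 𝓞 K)} ∣ differentIdeal ℤ (𝓞 K) := by
  rw [← map_span_natCast_int]
  refine not_map_dvd_differentIdeal_of_finrank_notMem ?_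
  rw [RingOfIntegers.rank, Ideal.mem_span_singleton]
  exact_mod_cast hn

lemma differentIdeal_dvd_span_of_not_dvd_finrank [IsGalois ℚ K] {p : ℕ} (hp : p.Prime)
    (hpK : ¬ p ∣ Module.finrank ℚ K)
    (hdisc : ∀ q : ℕ, q.Prime → (q : ℤ) ∣ discr K → q = p) :
    differentIdeal ℤ (𝓞 K) ∣ Ideal.span {(p : 𝓞 K)} := by
  have hover (P : Ideal (𝓞 K)) (hP : Prime P) (hpP : (p : 𝓞 K) ∈ P) :
      P.LiesOver (Ideal.span {(p : ℤ)}) :=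
    (Ideal.liesOver_span_iff (Ideal.isPrime_of_prime hP).ne_top
      (Nat.prime_iff_prime_int.mp hp)).mpr (by simpa using hpP)
  have hdiff (P : Ideal (𝓞 K)) (hP : Prime P) (hPD : P ∣ differentIdeal ℤ (𝓞 K)) :
      (p : 𝓞 K) ∈ P := by
    obtain ⟨k, hk⟩ : ∃ k, (discr K).natAbs = p ^ k :=
      ⟨_, Nat.eq_prime_pow_of_unique_prime_dvd (Int.natAbs_ne_zero.mpr (discr_ne_zero K))
        fun hq hqd ↦ hdisc _ hq (Int.natCast_dvd.mpr hqd)⟩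
    refine (Ideal.isPrime_of_prime hP).mem_of_pow_mem k (Ideal.dvd_iff_le.mp hPD ?_)
    rw [← Nat.cast_pow, ← hk, ← absNorm_differentIdeal K (𝓞 K)]
    exact Ideal.absNorm_mem _
  refine (dvd_or_dvd_of_forall_smul_eq Gal(K/ℚ) (fun P hP hPD ↦ hover P hP (hdiff P hP hPD))
    (fun P hP hPp ↦ hover P hP (by simpa using hPp)) smul_differentIdeal
    fun σ ↦ ?_).resolve_right (not_span_dvd_differentIdeal_of_not_dvd_finrank hpK)
  rw [← map_span_natCast_int, smul_map_algebraMap]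

lemma natAbs_discr_dvd_pow_finrank_sub_one [IsGalois ℚ K] {p : ℕ} (hp : p.Prime)
    (hpK : ¬ p ∣ Module.finrank ℚ K)
    (hdisc : ∀ q : ℕ, q.Prime → (q : ℤ) ∣ discr K → q = p) :
    (discr K).natAbs ∣ p ^ (Module.finrank ℚ K - 1) := by
  obtain ⟨I, hI⟩ := differentIdeal_dvd_span_of_not_dvd_finrank hp hpK hdisc
  have hnorm : p ^ Module.finrank ℚ K = (discr K).natAbs * I.absNorm := by
    rw [← absNorm_differentIdeal K (𝓞 K), ← map_mul, ← hI, Ideal.absNorm_span_natCast,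
      RingOfIntegers.rank]
  have hI1 : I.absNorm ≠ 1 := fun h ↦ not_span_dvd_differentIdeal_of_not_dvd_finrank hpK <| by
    rw [hI, Ideal.absNorm_eq_one_iff.mp h, Ideal.mul_top]
  have hpI : p ∣ I.absNorm := by
    obtain ⟨q, hq, hqI⟩ := Nat.exists_prime_and_dvd hI1
    have := hq.dvd_of_dvd_pow (hqI.trans (Dvd.intro_left _ hnorm.symm))
    rwa [← (Nat.prime_dvd_prime_iff_eq hq hp).mp this]
  refine Nat.dvd_of_mul_dvd_mul_right hp.pos ?_
  rw [pow_sub_one_mul Module.finrank_pos.ne', hnorm]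
  exact mul_dvd_mul_left _ hpI

lemma two_pow_finrank_sub_one_lt_abs_discr (h : 1 < Module.finrank ℚ K) :
    2 ^ (Module.finrank ℚ K - 1) < |discr K| := by
  obtain ⟨n, hn⟩ := Nat.exists_eq_add_of_le' h.le
  suffices (2 : ℝ) ^ n < |discr K| by
    rw [hn, Nat.add_sub_cancel]
    exact_mod_cast this
  calc (2 : ℝ) ^ n
    _ < (9 / 4) ^ n := pow_lt_pow_left₀ (by norm_num) (by norm_num) (by lia)
    _ = 4 / 9 * (9 / 4) ^ (n + 1) := by ring
    _ ≤ 4 / 9 * (3 * Real.pi / 4) ^ Module.finrank ℚ K := by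
      rw [hn]
      gcongr
      linarith [Real.pi_gt_three]
    _ ≤ |discr K| := abs_discr_ge h

lemma finrank_eq_one_of_odd_of_prime_dvd_discr [IsGalois ℚ K]
    (hodd : Odd (Module.finrank ℚ K)) (hdisc : ∀ q : ℕ, q.Prime → (q : ℤ) ∣ discr K → q = 2) :
    Module.finrank ℚ K = 1 := by
  by_contra hne
  have := hodd.pos
  have hle := Nat.le_of_dvd (by positivity)
    (natAbs_discr_dvd_pow_finrank_sub_one Nat.prime_two hodd.not_two_dvd_nat hdisc)
  have hlt := two_pow_finrank_sub_one_lt_abs_discr (K := K) (by lia)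
  rw [Int.abs_eq_natAbs] at hlt
  exact hlt.not_ge (by exact_mod_cast hle)

end NumberField

theorem degree_pow_two_of_abelian_unramified_outside_two_general
    (K : Type*) [Field K] [NumberField K] [IsGalois ℚ K] (S : Sylow 2 Gal(K/ℚ))
    [(S : Subgroup Gal(K/ℚ)).Normal]
    (hram : ∀ p : ℕ, p.Prime → p ≠ 2 →
      Squarefree (Ideal.span {(p : 𝓞 K)} : Ideal (𝓞 K))) :
    ∃ k : ℕ, Module.finrank ℚ K = 2 ^ k := by
  let F := IntermediateField.fixedField (S : Subgroup Gal(K/ℚ))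
  have : IsGalois ℚ F := IsGalois.of_fixedField_normal_subgroup _
  have hF : Module.finrank ℚ F = (S : Subgroup Gal(K/ℚ)).index := by
    rw [IntermediateField.finrank_eq_fixingSubgroup_index,
      IntermediateField.fixingSubgroup_fixedField]
  have hodd : Odd (Module.finrank ℚ F) := by
    rw [← Nat.not_even_iff_odd, even_iff_two_dvd, hF]
    exact S.not_dvd_index
  have hdisc (q : ℕ) (hq : q.Prime) (hqF : (q : ℤ) ∣ discr F) : q = 2 := by
    by_contra hq2
    exact not_dvd_discr_of_squarefree hq (hram q hq hq2) (hqF.trans (discr_dvd_discr F K))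
  have hindex := hF.symm.trans (finrank_eq_one_of_odd_of_prime_dvd_discr hodd hdisc)
  rw [← IsGalois.card_aut_eq_finrank ℚ K, ← (S : Subgroup Gal(K/ℚ)).card_mul_index, hindex, mul_one]
  exact IsPGroup.iff_card.mp S.isPGroup'

/-- An abelian extension of `ℚ` unramified outside 2 has degree a power of 2.
In particular there is no non-trivial abelian extension of `ℚ` of odd degree
unramified outside 2. -/
theorem degree_pow_two_of_abelian_unramified_outside_two
    (K : Type) [Field K] [NumberField K] [IsGalois ℚ K]
    (hab : ∀ σ τ : K ≃ₐ[ℚ] K, σ * τ = τ * σ)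
    (hram : ∀ p : ℕ, p.Prime → p ≠ 2 →
      Squarefree (Ideal.span {(p : 𝓞 K)} : Ideal (𝓞 K))) :
    ∃ k : ℕ, Module.finrank ℚ K = 2 ^ k := by
  have (S : Subgroup Gal(K/ℚ)) : S.Normal := ⟨fun σ hσ τ ↦ by rwa [hab τ σ, mul_inv_cancel_right]⟩
  exact degree_pow_two_of_abelian_unramified_outside_two_general K default hram
end

section
/- Let E = ℚ(ζ_3, ∛5) be the splitting field over ℚ of the polynomial x³ − 5, a number field of degree 6 over ℚ. Then the class number of E is odd. -/
open NumberField Polynomial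

/-!
Let `a ≠ b` be cube roots of `5` in `E = ℚ(ζ₃, ∛5)`. If `E/F` is Galois and `𝓞 F` is principal, the
product of the conjugates over `F` of an ideal of `𝓞 E` is extended from its relative norm, hence
principal. For `F = ℚ(a)` and `F = ℚ(b)` this says that the involutions `τ₁` and `τ₂` fixing `a` and
`b` invert ideal classes, so `τ₁ * τ₂` acts trivially on the class group. As `τ₁ * τ₂` generates
`Gal(E/ℚ(ζ₃))` and `ℚ(ζ₃)` has class number one, the same statement for `F = ℚ(ζ₃)` reads
`c ^ 3 = 1`.

The ring of integers of `ℚ(∛5)` is `ℤ[∛5]`, since the minimal polynomials of `∛5` and `∛5 - 5` are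
Eisenstein at `5` and at `3`, the only primes dividing the discriminant `-675` of `1, ∛5, ∛25`. The
Minkowski bound is below `8`. In a residue field with `N` elements `∛5` is a root of `x ^ N = x`;
this rules out `N = 7` and, for the smaller `N`, exhibits an element of norm `± N` in the prime.
-/

namespace CubicFive

section GroupAction

variable {G A : Type*} [Group G] [CommGroup A] [MulDistribMulAction G A]

lemma smul_eq_inv_of_prod_smul_eq_one [Fintype G] (hG : Nat.card G = 2) {c : A}
    (hc : ∏ g : G, g • c = 1) {t : G} (ht : t ≠ 1) : t • c = c⁻¹ := by
  classical
  have huniv : (Finset.univ : Finset G) = {1, t} := by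
    rw [eq_comm, ← Finset.card_eq_iff_eq_univ, Finset.card_pair ht.symm,
      ← Nat.card_eq_fintype_card, hG]
  rw [huniv, Finset.prod_pair ht.symm, one_smul] at hc
  exact eq_inv_of_mul_eq_one_right hc

lemma pow_card_eq_one_of_smul_eq [Fintype G] (hG : (Nat.card G).Prime) {c : A}
    (hc : ∏ g : G, g • c = 1) {σ : G} (hσ : σ ≠ 1) (hσc : σ • c = c) : c ^ Nat.card G = 1 := by
  have := Fact.mk hG
  have htop : MulAction.stabilizer G c = ⊤ :=
    (Subgroup.eq_bot_or_eq_top_of_prime_card _).resolve_left fun hbot ↦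
      hσ (Subgroup.mem_bot.1 (hbot ▸ MulAction.mem_stabilizer_iff.2 hσc))
  have hfix (g : G) : g • c = c := MulAction.mem_stabilizer_iff.1 (htop ▸ Subgroup.mem_top g)
  simpa only [hfix, Finset.prod_const, Finset.card_univ, ← Nat.card_eq_fintype_card] using hc

lemma notMem_of_natCard_eq_two {N H : Subgroup G} (hN : Odd (Nat.card N)) (hH : Nat.card H = 2)
    {t : G} (htH : t ∈ H) (ht : t ≠ 1) : t ∉ N := fun htN ↦
  have hdisj : Disjoint H N :=
    Subgroup.disjoint_of_coprime_natCard (hH ▸ Nat.coprime_two_left.2 hN)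
  ht (Subgroup.disjoint_def.1 hdisj htH htN)

theorem pow_card_eq_one_of_prod_smul_eq_one {H₁ H₂ N : Subgroup G} [Fintype H₁] [Fintype H₂]
    [Fintype N] (hH : H₁ ≠ H₂) (hH₁ : Nat.card H₁ = 2) (hH₂ : Nat.card H₂ = 2)
    (hN : (Nat.card N).Prime) (hN_odd : Odd (Nat.card N)) (hN_index : N.index = 2)
    (h₁ : ∀ c : A, ∏ t : H₁, (t : G) • c = 1) (h₂ : ∀ c : A, ∏ t : H₂, (t : G) • c = 1)
    (h : ∀ c : A, ∏ n : N, (n : G) • c = 1) (c : A) : c ^ Nat.card N = 1 := by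
  obtain ⟨τ₁, hτ₁, hτ₁H₂⟩ : ∃ τ ∈ H₁, τ ∉ H₂ := SetLike.not_le_iff_exists.1 fun hle ↦
    hH (Subgroup.eq_of_le_of_card_ge hle (by rw [hH₁, hH₂]))
  obtain ⟨⟨τ₂, hτ₂⟩, hτ₂_ne⟩ : ∃ t : H₂, t ≠ 1 :=
    H₂.ne_bot_iff_exists_ne_one.1 (H₂.one_lt_card_iff_ne_bot.1 (by omega))
  have hτ₁_ne : τ₁ ≠ 1 := by rintro rfl; exact hτ₁H₂ (one_mem H₂)
  have hmem : τ₁ * τ₂ ∈ N := (Subgroup.mul_mem_iff_of_index_two hN_index).2 <|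
    iff_of_false (notMem_of_natCard_eq_two hN_odd hH₁ hτ₁ hτ₁_ne)
      (notMem_of_natCard_eq_two hN_odd hH₂ hτ₂ (by simpa using hτ₂_ne))
  have hne : τ₁ * τ₂ ≠ 1 := fun hmul ↦ hτ₁H₂ <| by
    rw [eq_inv_of_mul_eq_one_left hmul]; exact inv_mem hτ₂
  have hinv₁ (c : A) : τ₁ • c = c⁻¹ :=
    smul_eq_inv_of_prod_smul_eq_one hH₁ (h₁ c) (t := ⟨τ₁, hτ₁⟩) (by simpa using hτ₁_ne)
  have hinv₂ (c : A) : τ₂ • c = c⁻¹ :=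
    smul_eq_inv_of_prod_smul_eq_one hH₂ (h₂ c) (t := ⟨τ₂, hτ₂⟩) hτ₂_ne
  refine pow_card_eq_one_of_smul_eq hN (h c) (σ := ⟨τ₁ * τ₂, hmem⟩) (by simpa using hne) ?_
  rw [Subgroup.mk_smul, mul_smul, hinv₂, hinv₁, inv_inv]

end GroupAction

section RelativeNorm

open scoped nonZeroDivisors Pointwise

variable {A B : Type*} [CommRing A] [IsDedekindDomain A] [CommRing B] [IsDedekindDomain B]
  [Algebra A B] [Module.Finite A B] [Module.IsTorsionFree A B]

lemma eq_of_le_of_relNorm_eq {I J : Ideal B} (hJ : J ≠ ⊥) (hIJ : I ≤ J)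
    (h : Ideal.relNorm A I = Ideal.relNorm A J) : I = J := by
  obtain ⟨Q, rfl⟩ := Ideal.dvd_iff_le.2 hIJ
  have hQ : Ideal.relNorm A Q = 1 := by
    refine mul_left_cancel₀ (a := Ideal.relNorm A J) ?_ (by rw [← map_mul, h, mul_one])
    rwa [Ne, Ideal.zero_eq_bot, Ideal.relNorm_eq_bot_iff]
  have hQ_top : Q = ⊤ := by
    have := Ideal.relNorm_le_comap A Q
    rwa [hQ, Ideal.one_eq_top, top_le_iff, Ideal.comap_eq_top_iff] at this
  rw [hQ_top, ← Ideal.one_eq_top, mul_one]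

variable (G : Type*) [Group G] [Fintype G] [MulSemiringAction G B] [IsGaloisGroup G A B]

lemma algebraMap_intNorm_eq_prod_smul (x : B) :
    algebraMap A B (Algebra.intNorm A B x) = ∏ g : G, g • x := by
  let := FractionRing.liftAlgebra A (FractionRing B)
  let := IsFractionRing.mulSemiringAction G B (FractionRing B)
  have : IsGalois (FractionRing A) (FractionRing B) :=
    IsGaloisGroup.isGalois G (FractionRing A) (FractionRing B)
  rw [Algebra.algebraMap_intNorm_of_isGalois]
  exact (Fintype.prod_equiv (IsGaloisGroup.mulEquivAlgEquiv G A B).toEquiv _ _ fun _ ↦ rfl).symm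

theorem map_relNorm_eq_prod_smul (I : Ideal B) :
    (Ideal.relNorm A I).map (algebraMap A B) = ∏ g : G, g • I := by
  rcases eq_or_ne I ⊥ with rfl | hI
  · rw [Ideal.relNorm_bot, Ideal.map_bot]
    exact (Finset.prod_eq_zero (Finset.mem_univ 1) (one_smul G _)).symm
  have hle : (Ideal.relNorm A I).map (algebraMap A B) ≤ ∏ g : G, g • I := by
    rw [Ideal.map_relNorm, Ideal.span_le]
    rintro _ ⟨x, hx, rfl⟩
    rw [Function.comp_apply, algebraMap_intNorm_eq_prod_smul G]
    exact Ideal.prod_mem_prod fun g _ ↦ Ideal.smul_mem_pointwise_smul g x I hx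
  have hprod : ∏ g : G, g • I ≠ ⊥ :=
    Finset.prod_ne_zero_iff.2 fun g _ ↦ (smul_ne_zero_iff_ne g).2 hI
  refine eq_of_le_of_relNorm_eq (A := A) hprod hle ?_
  have : SMulCommClass G A B := IsGaloisGroup.commutes
  simp_rw [Ideal.relNorm_algebraMap, map_prod, Ideal.relNorm_smul, Finset.prod_const,
    Finset.card_univ, ← Nat.card_eq_fintype_card, IsGaloisGroup.card_eq_finrank' G A B]

end RelativeNorm

section ClassGroup

open scoped nonZeroDivisors Pointwise

variable {G B : Type*} [Group G] [CommRing B] [IsDedekindDomain B] [MulSemiringAction G B]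

/-- The action on nonzero ideals induced by an action on a Dedekind domain. -/
noncomputable instance : MulDistribMulAction G (Ideal B)⁰ where
  smul g I := ⟨g • (I : Ideal B), mem_nonZeroDivisors_iff_ne_zero.2 <|
    (smul_ne_zero_iff_ne g).2 (nonZeroDivisors.coe_ne_zero I)⟩
  one_smul I := Subtype.ext (one_smul G (I : Ideal B))
  mul_smul g h I := Subtype.ext (mul_smul g h (I : Ideal B))
  smul_mul g I J := Subtype.ext (smul_mul' g (I : Ideal B) J)
  smul_one g := Subtype.ext (smul_one g)

lemma coe_smul_nonZeroDivisors (g : G) (I : (Ideal B)⁰) :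
    ((g • I : (Ideal B)⁰) : Ideal B) = g • (I : Ideal B) := rfl

lemma mk0_smul_eq_mk0_smul (g : G) {I J : (Ideal B)⁰} (h : ClassGroup.mk0 I = ClassGroup.mk0 J) :
    ClassGroup.mk0 (g • I) = ClassGroup.mk0 (g • J) := by
  obtain ⟨x, y, hx, hy, hxy⟩ := ClassGroup.mk0_eq_mk0_iff.1 h
  refine ClassGroup.mk0_eq_mk0_iff.2
    ⟨g • x, g • y, (smul_ne_zero_iff_ne g).2 hx, (smul_ne_zero_iff_ne g).2 hy, ?_⟩
  have hspan (z : B) : g • Ideal.span {z} = Ideal.span {g • z} := by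
    rw [Ideal.pointwise_smul_def, Ideal.map_span, Set.image_singleton]; rfl
  simpa only [coe_smul_nonZeroDivisors, smul_mul', hspan] using congrArg (g • ·) hxy

/-- The action on ideal classes induced by the action on nonzero ideals, through which it is
computed by `mk0_smul`. -/
noncomputable instance : SMul G (ClassGroup B) where
  smul g c := ClassGroup.mk0 (g • Function.surjInv ClassGroup.mk0_surjective c)

lemma mk0_smul (g : G) (I : (Ideal B)⁰) : ClassGroup.mk0 (g • I) = g • ClassGroup.mk0 I :=
  mk0_smul_eq_mk0_smul g (Function.surjInv_eq ClassGroup.mk0_surjective _).symm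

/-- Elements of `G` act on ideal classes by group automorphisms. -/
noncomputable instance : MulDistribMulAction G (ClassGroup B) :=
  ClassGroup.mk0_surjective.mulDistribMulAction ClassGroup.mk0 mk0_smul

theorem prod_smul_classGroup_eq_one (A : Type*) [CommRing A] [IsDedekindDomain A]
    [IsPrincipalIdealRing A] [Algebra A B] [Module.Finite A B] [Module.IsTorsionFree A B]
    (H : Subgroup G) [Fintype H] [IsGaloisGroup H A B] (c : ClassGroup B) :
    ∏ h : H, (h : G) • c = 1 := by
  obtain ⟨I, rfl⟩ := ClassGroup.mk0_surjective c
  have hnorm : ((∏ h : H, (h : G) • I : (Ideal B)⁰) : Ideal B) =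
      (Ideal.relNorm A (I : Ideal B)).map (algebraMap A B) := by
    rw [map_relNorm_eq_prod_smul H, Submonoid.coe_finsetProd]
    rfl
  have hprincipal : ((∏ h : H, (h : G) • I : (Ideal B)⁰) : Ideal B).IsPrincipal :=
    hnorm ▸ (IsPrincipalIdealRing.principal _).map_ringHom _
  simp_rw [← mk0_smul]
  rw [← map_prod]
  exact (ClassGroup.mk0_eq_one_iff (SetLike.coe_mem _)).2 hprincipal

end ClassGroup

section GaloisExtension

variable {K E : Type*} [Field K] [NumberField K] [Field E] [NumberField E] [Algebra K E]
  [IsGalois K E]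

instance isGaloisGroup_fixingSubgroup (F : IntermediateField K E) :
    IsGaloisGroup F.fixingSubgroup (𝓞 F) (𝓞 E) :=
  have : IsGaloisGroup F.fixingSubgroup F E :=
    inferInstanceAs (IsGaloisGroup (_root_.fixingSubgroup Gal(E/K) (F : Set E)) F E)
  IsGaloisGroup.of_isFractionRing _ _ _ F E

theorem classGroup_pow_finrank_eq_one {F₁ F₂ M : IntermediateField K E}
    [IsPrincipalIdealRing (𝓞 F₁)] [IsPrincipalIdealRing (𝓞 F₂)] [IsPrincipalIdealRing (𝓞 M)]
    (hF : F₁ ≠ F₂) (hF₁ : Module.finrank F₁ E = 2) (hF₂ : Module.finrank F₂ E = 2)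
    (hM : Module.finrank K M = 2) (hprime : (Module.finrank M E).Prime)
    (hodd : Odd (Module.finrank M E)) (c : ClassGroup (𝓞 E)) :
    c ^ Module.finrank M E = 1 := by
  have hne : F₁.fixingSubgroup ≠ F₂.fixingSubgroup :=
    IsGalois.intermediateFieldEquivSubgroup.injective.ne hF
  have hindex : M.fixingSubgroup.index = 2 := M.finrank_eq_fixingSubgroup_index ▸ hM
  rw [← IsGalois.card_fixingSubgroup_eq_finrank] at hF₁ hF₂ hprime hodd ⊢
  have := Fintype.ofFinite F₁.fixingSubgroup
  have := Fintype.ofFinite F₂.fixingSubgroup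
  have := Fintype.ofFinite M.fixingSubgroup
  refine pow_card_eq_one_of_prod_smul_eq_one hne hF₁ hF₂ hprime hodd hindex ?_ ?_ ?_ c
  · exact prod_smul_classGroup_eq_one (𝓞 F₁) F₁.fixingSubgroup
  · exact prod_smul_classGroup_eq_one (𝓞 F₂) F₂.fixingSubgroup
  · exact prod_smul_classGroup_eq_one (𝓞 M) M.fixingSubgroup

end GaloisExtension

section PureCubic

variable {R S : Type*} [CommRing R] [CommRing S] [Algebra R S] {B : PowerBasis R S} {m : R}

lemma leftMulMatrix_pureCubic (hdim : B.dim = 3) (hgen : B.gen ^ 3 = algebraMap R S m)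
    (x y z : R) :
    Algebra.leftMulMatrix (B.basis.reindex (finCongr hdim))
      (algebraMap R S x + y • B.gen + z • B.gen ^ 2) =
      !![x, m * z, m * y; y, x, m * z; z, y, x] := by
  set b := B.basis.reindex (finCongr hdim)
  have hb (i : Fin 3) : b i = B.gen ^ (i : ℕ) := by simp [b]
  have hlmul : Algebra.lmul R S (algebraMap R S x + y • B.gen + z • B.gen ^ 2) =
      Matrix.toLin b b !![x, m * z, m * y; y, x, m * z; z, y, x] := b.ext fun j ↦ by
    rw [Matrix.toLin_self, Fin.sum_univ_three]
    simp only [hb, Algebra.coe_lmul_eq_mul, LinearMap.mul_apply_apply, Algebra.smul_def]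
    fin_cases j <;>
      simp only [Fin.zero_eta, Fin.mk_one, Fin.reduceFinMk, Fin.coe_ofNat_eq_mod, Nat.mod_succ,
        Nat.reduceMod, Matrix.of_apply, Matrix.cons_val', Matrix.cons_val, map_mul]
    · ring
    · linear_combination algebraMap R S z * hgen
    · linear_combination (algebraMap R S y + algebraMap R S z * B.gen) * hgen
  rw [Algebra.leftMulMatrix_apply, hlmul, LinearMap.toMatrix_toLin]

lemma norm_pureCubic (hdim : B.dim = 3) (hgen : B.gen ^ 3 = algebraMap R S m) (x y z : R) :
    Algebra.norm R (algebraMap R S x + y • B.gen + z • B.gen ^ 2) =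
      x ^ 3 + m * y ^ 3 + m ^ 2 * z ^ 3 - 3 * m * x * y * z := by
  rw [Algebra.norm_eq_matrix_det (B.basis.reindex (finCongr hdim)),
    leftMulMatrix_pureCubic hdim hgen, Matrix.det_fin_three]
  simp only [Matrix.of_apply, Matrix.cons_val', Matrix.cons_val]
  ring

lemma trace_pureCubic (hdim : B.dim = 3) (hgen : B.gen ^ 3 = algebraMap R S m) (x y z : R) :
    Algebra.trace R S (algebraMap R S x + y • B.gen + z • B.gen ^ 2) = 3 * x := by
  rw [Algebra.trace_eq_matrix_trace (B.basis.reindex (finCongr hdim)),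
    leftMulMatrix_pureCubic hdim hgen, Matrix.trace_fin_three_of]
  ring

lemma discr_pureCubic (hdim : B.dim = 3) (hgen : B.gen ^ 3 = algebraMap R S m) :
    Algebra.discr R B.basis = -27 * m ^ 2 := by
  have htrace := trace_pureCubic hdim hgen
  have h0 : Algebra.trace R S 1 = 3 := by simpa using htrace 1 0 0
  have h1 : Algebra.trace R S B.gen = 0 := by simpa using htrace 0 1 0
  have h2 : Algebra.trace R S (B.gen ^ 2) = 0 := by simpa using htrace 0 0 1
  have h3 : Algebra.trace R S (B.gen ^ 3) = 3 * m := by rw [hgen]; simpa using htrace m 0 0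
  have h4 : Algebra.trace R S (B.gen ^ 4) = 0 := by
    rw [pow_succ, hgen, ← Algebra.smul_def, map_smul, h1, smul_zero]
  have hmatrix : Algebra.traceMatrix R (B.basis.reindex (finCongr hdim)) =
      !![3, 0, 0; 0, 0, 3 * m; 0, 3 * m, 0] := by
    ext i j
    simp only [Algebra.traceMatrix_apply, Algebra.traceForm_apply, Module.Basis.reindex_apply,
      PowerBasis.coe_basis, ← pow_add]
    fin_cases i <;> fin_cases j <;> simp [h0, h1, h2, h3, h4]
  rw [← Algebra.discr_reindex R B.basis (finCongr hdim)]
  trans (!![3, 0, 0; 0, 0, 3 * m; 0, 3 * m, 0] : Matrix (Fin 3) (Fin 3) R).det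
  · rw [← hmatrix, Algebra.discr_def]
    simp
  · rw [Matrix.det_fin_three]
    simp only [Matrix.of_apply, Matrix.cons_val', Matrix.cons_val]
    ring

end PureCubic

section Eisenstein

lemma minpoly_eq_of_isEisensteinAt {R S : Type*} [CommRing R] [IsDomain R] [IsIntegrallyClosed R]
    [CommRing S] [IsDomain S] [Algebra R S] [Module.IsTorsionFree R S] {P : Ideal R}
    (hP : P.IsPrime) {f : R[X]} (hf : f.Monic) (hdeg : 0 < f.natDegree)
    (hfP : f.IsEisensteinAt P) {x : S} (hx : aeval x f = 0) : minpoly R x = f := by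
  have hint : IsIntegral R x := ⟨f, hf, hx⟩
  have hassoc := ((hfP.irreducible hP hf.isPrimitive hdeg).dvd_iff.1
    (minpoly.isIntegrallyClosed_dvd hint hx)).resolve_left (minpoly.not_isUnit R x)
  exact (eq_of_monic_of_associated hf (minpoly.monic hint) hassoc).symm

lemma isEisensteinAt_X_pow_sub_C {R : Type*} [CommRing R] [IsDomain R] {p : R} (hp : Prime p)
    {n : ℕ} (hn : n ≠ 0) : (X ^ n - C p).IsEisensteinAt (Ideal.span {p}) := by
  refine (monic_X_pow_sub_C p hn).isEisensteinAt_of_mem_of_notMem ?_ ?_ ?_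
  · rw [Ne, Ideal.span_singleton_eq_top]; exact hp.not_isUnit
  · intro k hk
    rw [natDegree_X_pow_sub_C] at hk
    rw [coeff_sub, coeff_X_pow, if_neg hk.ne, coeff_C, Ideal.mem_span_singleton]
    split_ifs <;> simp
  · rw [Ideal.span_singleton_pow, Ideal.mem_span_singleton, sq, coeff_sub, coeff_X_pow,
      if_neg hn.symm, coeff_C_zero, zero_sub, dvd_neg]
    exact fun h ↦ hp.not_isUnit (isUnit_of_dvd_one
      ((mul_dvd_mul_iff_left hp.ne_zero).1 (by rwa [mul_one])))

/-- `(X + m) ^ 3 - m`, the polynomial of `θ - m` when `θ ^ 3 = m`, with expanded coefficients. -/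
noncomputable def shiftedCubic (m : ℤ) : ℤ[X] :=
  X ^ 3 + C (3 * m) * X ^ 2 + C (3 * m ^ 2) * X + C (m ^ 3 - m)

lemma monic_shiftedCubic (m : ℤ) : (shiftedCubic m).Monic := by
  unfold shiftedCubic; monicity!

lemma natDegree_shiftedCubic (m : ℤ) : (shiftedCubic m).natDegree = 3 := by
  unfold shiftedCubic; compute_degree!

lemma isEisensteinAt_shiftedCubic {m : ℤ} (hm : ¬ 9 ∣ m ^ 3 - m) :
    (shiftedCubic m).IsEisensteinAt (Ideal.span {3}) := by
  refine (monic_shiftedCubic m).isEisensteinAt_of_mem_of_notMem ?_ ?_ ?_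
  · rw [Ne, Ideal.span_singleton_eq_top]; exact Int.prime_three.not_isUnit
  · intro k hk
    rw [natDegree_shiftedCubic] at hk
    rw [Ideal.mem_span_singleton]
    have hm3 : 3 ∣ m ^ 3 - m := by
      rw [← Nat.cast_ofNat, ← ZMod.intCast_zmod_eq_zero_iff_dvd]; simp
    interval_cases k <;>
      simp only [shiftedCubic, coeff_add, coeff_C_mul, coeff_X_pow, coeff_X, coeff_C]
    · simpa using hm3
    · simp
    · simp
  · rw [Ideal.span_singleton_pow, Ideal.mem_span_singleton]
    simp only [shiftedCubic, coeff_add, coeff_C_mul, coeff_X_pow, coeff_X, coeff_C]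
    simpa using hm

end Eisenstein

section RingOfIntegers

lemma isIntegral_of_pow_eq_intCast {R : Type*} [CommRing R] {n : ℕ} (hn : n ≠ 0) {α : R} {m : ℤ}
    (hα : α ^ n = m) : IsIntegral ℤ α :=
  .of_pow hn.pos (hα ▸ isIntegral_algebraMap (x := m))

lemma adjoin_sub_algebraMap {R A : Type*} [CommRing R] [CommRing A] [Algebra R A] (x : A) (r : R) :
    Algebra.adjoin R {x - algebraMap R A r} = Algebra.adjoin R {x} := by
  refine le_antisymm (Algebra.adjoin_singleton_le ?_) (Algebra.adjoin_singleton_le ?_)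
  · exact sub_mem (Algebra.self_mem_adjoin_singleton R x) (Subalgebra.algebraMap_mem _ r)
  · simpa using add_mem (Algebra.self_mem_adjoin_singleton R (x - algebraMap R A r))
      (Subalgebra.algebraMap_mem _ r)

variable {K : Type*} [Field K] [CharZero K] {p : ℤ} {n : ℕ}

lemma minpoly_eq_X_pow_sub_C (hp : Prime p) (hn : n ≠ 0) {α : K} (hα : α ^ n = p) :
    minpoly ℤ α = X ^ n - C p :=
  minpoly_eq_of_isEisensteinAt ((Ideal.span_singleton_prime hp.ne_zero).2 hp)
    (monic_X_pow_sub_C p hn) (by rw [natDegree_X_pow_sub_C]; exact hn.pos)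
    (isEisensteinAt_X_pow_sub_C hp hn) (by simp [hα])

lemma minpoly_rat_eq_X_pow_sub_C (hp : Prime p) (hn : n ≠ 0) {α : K} (hα : α ^ n = p) :
    minpoly ℚ α = X ^ n - C (p : ℚ) := by
  rw [minpoly.isIntegrallyClosed_eq_field_fractions' ℚ (isIntegral_of_pow_eq_intCast hn hα),
    minpoly_eq_X_pow_sub_C hp hn hα]
  simp

lemma powerBasis_dim_eq (hp : Prime p) (hn : n ≠ 0) {B : PowerBasis ℚ K} (hgen : B.gen ^ n = p) :
    B.dim = n := by
  rw [← B.natDegree_minpoly, minpoly_rat_eq_X_pow_sub_C hp hn hgen, natDegree_X_pow_sub_C]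

lemma minpoly_sub_eq_shiftedCubic (hp : ¬ 9 ∣ p ^ 3 - p) {α : K} (hα : α ^ 3 = p) :
    minpoly ℤ (α - p) = shiftedCubic p := by
  refine minpoly_eq_of_isEisensteinAt ((Ideal.span_singleton_prime (by norm_num)).2 Int.prime_three)
    (monic_shiftedCubic p) (by rw [natDegree_shiftedCubic]; norm_num)
    (isEisensteinAt_shiftedCubic hp) ?_
  simp only [shiftedCubic, aeval_def, eval₂_add, eval₂_mul, eval₂_pow, eval₂_X, eval₂_C,
    algebraMap_int_eq]
  simp only [eq_intCast, Int.cast_sub, Int.cast_mul, Int.cast_pow, Int.cast_ofNat]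
  linear_combination hα

lemma mem_adjoin_of_isIntegral (hp : Prime p) (hp9 : ¬ 9 ∣ p ^ 3 - p) {B : PowerBasis ℚ K}
    (hgen : B.gen ^ 3 = p) {z : K} (hz : IsIntegral ℤ z) : z ∈ Algebra.adjoin ℤ {B.gen} := by
  have := B.finite
  have hint : IsIntegral ℤ B.gen := isIntegral_of_pow_eq_intCast three_ne_zero hgen
  have hdisc : ((p ^ 2 : ℤ) • (3 ^ 3 : ℤ) • z) ∈ Algebra.adjoin ℤ {B.gen} := by
    have := neg_mem (Algebra.discr_mul_isIntegral_mem_adjoin ℚ hint hz)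
    rw [discr_pureCubic (m := (p : ℚ)) (powerBasis_dim_eq hp three_ne_zero hgen)
      (by simpa using hgen)] at this
    convert this using 1
    rw [smul_smul, ← neg_smul, ← Int.cast_smul_eq_zsmul ℚ]
    congr 1
    push_cast
    ring
  have h27 : (3 ^ 3 : ℤ) • z ∈ Algebra.adjoin ℤ {B.gen} :=
    mem_adjoin_of_smul_prime_pow_smul_of_minpoly_isEisensteinAt hp hint (hz.smul _) hdisc
      (minpoly_eq_X_pow_sub_C hp three_ne_zero hgen ▸ isEisensteinAt_X_pow_sub_C hp three_ne_zero)
  have htop : Algebra.adjoin ℚ {B.gen - p} = ⊤ := by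
    rw [← B.adjoin_gen_eq_top, ← adjoin_sub_algebraMap B.gen (p : ℚ), map_intCast]
  let B' := PowerBasis.ofAdjoinEqTop (Algebra.IsIntegral.isIntegral (B.gen - p)) htop
  have hadj : Algebra.adjoin ℤ {B'.gen} = Algebra.adjoin ℤ {B.gen} := by
    rw [PowerBasis.ofAdjoinEqTop_gen, ← adjoin_sub_algebraMap B.gen p, algebraMap_int_eq,
      eq_intCast]
  rw [← hadj] at h27 ⊢
  refine mem_adjoin_of_smul_prime_pow_smul_of_minpoly_isEisensteinAt Int.prime_three ?_ hz h27 ?_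
  · exact PowerBasis.ofAdjoinEqTop_gen _ htop ▸ hint.sub (isIntegral_algebraMap (x := p))
  · rw [PowerBasis.ofAdjoinEqTop_gen, minpoly_sub_eq_shiftedCubic hp9 hgen]
    exact isEisensteinAt_shiftedCubic hp9

lemma exists_powerBasis_ringOfIntegers [NumberField K] (hp : Prime p) (hp9 : ¬ 9 ∣ p ^ 3 - p)
    {B : PowerBasis ℚ K} (hgen : B.gen ^ 3 = p) :
    ∃ B' : PowerBasis ℤ (𝓞 K), B'.dim = 3 ∧ B'.gen ^ 3 = p := by
  obtain ⟨θ, hθB⟩ : ∃ θ : 𝓞 K, (θ : K) = B.gen :=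
    ⟨⟨B.gen, isIntegral_of_pow_eq_intCast three_ne_zero hgen⟩, rfl⟩
  have hθ : θ ^ 3 = p := by ext; simpa [hθB] using hgen
  have htop : Algebra.adjoin ℤ {θ} = ⊤ := by
    refine eq_top_iff.2 fun z _ ↦ ?_
    have hz := mem_adjoin_of_isIntegral hp hp9 hgen (RingOfIntegers.isIntegral_coe z)
    have hmap : Algebra.adjoin ℤ {B.gen} =
        (Algebra.adjoin ℤ {θ}).map (IsScalarTower.toAlgHom ℤ (𝓞 K) K) := by
      rw [AlgHom.map_adjoin, Set.image_singleton, ← hθB]; rfl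
    rw [hmap] at hz
    obtain ⟨y, hy, hyz⟩ := hz
    exact RingOfIntegers.ext hyz ▸ hy
  refine ⟨.ofAdjoinEqTop' (RingOfIntegers.isIntegral θ) htop, ?_, ?_⟩
  · rw [← PowerBasis.finrank, RingOfIntegers.rank, B.finrank,
      powerBasis_dim_eq hp three_ne_zero hgen]
  · rwa [PowerBasis.ofAdjoinEqTop'_gen]

end RingOfIntegers

section ClassNumberOne

variable {S : Type*} [CommRing S]

lemma norm_of_gen_pow_three_eq_five {B : PowerBasis ℤ S} (hdim : B.dim = 3) (hgen : B.gen ^ 3 = 5)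
    (x y z : ℤ) {π : S} (hπ : π = x + y * B.gen + z * B.gen ^ 2) :
    Algebra.norm ℤ π = x ^ 3 + 5 * y ^ 3 + 25 * z ^ 3 - 15 * x * y * z := by
  have := norm_pureCubic (m := (5 : ℤ)) hdim (by simpa using hgen) x y z
  simp only [zsmul_eq_mul, algebraMap_int_eq, eq_intCast, ← hπ] at this
  linear_combination this

lemma norm_sq_sub_three {B : PowerBasis ℤ S} (hdim : B.dim = 3) (hgen : B.gen ^ 3 = 5) :
    Algebra.norm ℤ (B.gen ^ 2 - 3) = -2 := by
  rw [norm_of_gen_pow_three_eq_five hdim hgen (-3) 0 1 (by push_cast; ring)]; norm_num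

variable [IsDedekindDomain S] [Module.Free ℤ S] [Module.Finite ℤ S] {P : Ideal S}

lemma isPrincipal_of_absNorm_eq_natAbs_norm (hP : Ideal.absNorm P ≠ 0) {π : S} (hπ : π ∈ P)
    (h : Ideal.absNorm P = (Algebra.norm ℤ π).natAbs) : P.IsPrincipal := by
  obtain ⟨Q, hQ⟩ := Ideal.dvd_span_singleton.2 hπ
  have hnorm : Ideal.absNorm P * Ideal.absNorm Q = Ideal.absNorm P * 1 := by
    rw [← map_mul, ← hQ, Ideal.absNorm_span_singleton, h, mul_one]
  have hQ_top : Q = ⊤ :=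
    Ideal.absNorm_eq_one_iff.1 (Nat.eq_of_mul_eq_mul_left (Nat.pos_of_ne_zero hP) hnorm)
  rw [hQ_top, Ideal.mul_top] at hQ
  exact ⟨π, hQ.symm⟩

lemma pow_absNorm_sub_mem (P : Ideal S) [P.IsMaximal] (x : S) : x ^ Ideal.absNorm P - x ∈ P := by
  let := Ideal.Quotient.field P
  have : Finite (S ⧸ P) := by
    obtain ⟨p, n, -, -, hp, hnorm⟩ := Ideal.exists_prime_and_absNorm_eq_pow P
    exact (Ideal.absNorm_ne_zero_iff P).1 (hnorm ▸ pow_ne_zero n hp.ne_zero)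
  let := Fintype.ofFinite (S ⧸ P)
  have hcard : Fintype.card (S ⧸ P) = Ideal.absNorm P := by
    rw [Ideal.absNorm_apply, Submodule.cardQuot_apply, Nat.card_eq_fintype_card]
  rw [← hcard, ← Ideal.Quotient.eq, map_pow, FiniteField.pow_card]

variable [P.IsMaximal] {B : PowerBasis ℤ S}

lemma isPrincipal_of_absNorm_eq_two (hdim : B.dim = 3) (hgen : B.gen ^ 3 = 5)
    (hP : Ideal.absNorm P = 2) : P.IsPrincipal := by
  have h2 : (2 : S) ∈ P := by simpa [hP] using Ideal.absNorm_mem P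
  have hfermat : B.gen ^ 2 - B.gen ∈ P := hP ▸ pow_absNorm_sub_mem P B.gen
  have hπ : B.gen ^ 2 - 3 ∈ P := by
    rw [show B.gen ^ 2 - 3 = -B.gen * (B.gen ^ 2 - B.gen) + 2 by linear_combination hgen]
    exact add_mem (P.mul_mem_left _ hfermat) h2
  exact isPrincipal_of_absNorm_eq_natAbs_norm (by simp [hP]) hπ
    (by simp [hP, norm_sq_sub_three hdim hgen])

lemma isPrincipal_of_absNorm_eq_three (hdim : B.dim = 3) (hgen : B.gen ^ 3 = 5)
    (hP : Ideal.absNorm P = 3) : P.IsPrincipal := by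
  have h3 : (3 : S) ∈ P := by simpa [hP] using Ideal.absNorm_mem P
  have hfermat : B.gen ^ 3 - B.gen ∈ P := hP ▸ pow_absNorm_sub_mem P B.gen
  have hπ : B.gen - 2 ∈ P := by
    rw [show B.gen - 2 = 3 - (B.gen ^ 3 - B.gen) by linear_combination hgen]
    exact sub_mem h3 hfermat
  have hnorm : Algebra.norm ℤ (B.gen - 2) = -3 := by
    rw [norm_of_gen_pow_three_eq_five hdim hgen (-2) 1 0 (by push_cast; ring)]; norm_num
  exact isPrincipal_of_absNorm_eq_natAbs_norm (by simp [hP]) hπ (by simp [hP, hnorm])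

lemma isPrincipal_of_absNorm_eq_four (hdim : B.dim = 3) (hgen : B.gen ^ 3 = 5)
    (hP : Ideal.absNorm P = 4) : P.IsPrincipal := by
  have hprime : P.IsPrime := inferInstance
  have h2 : (2 : S) ∈ P := hprime.mem_of_pow_mem 2 <| by
    rw [show (2 : S) ^ 2 = (4 : ℕ) by norm_num, ← hP]; exact Ideal.absNorm_mem P
  have hnotMem : B.gen ^ 2 - 3 ∉ P := fun hmem ↦ by
    have := Ideal.absNorm_dvd_norm_of_mem hmem
    rw [hP, norm_sq_sub_three hdim hgen] at this
    norm_num at this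
  have hfactor : (B.gen ^ 2 - 3) * (9 + 5 * B.gen + 3 * B.gen ^ 2) = -2 := by
    linear_combination (5 + 3 * B.gen) * hgen
  have hπ : 9 + 5 * B.gen + 3 * B.gen ^ 2 ∈ P :=
    (hprime.mem_or_mem (hfactor ▸ neg_mem h2)).resolve_left hnotMem
  have hnorm : Algebra.norm ℤ (9 + 5 * B.gen + 3 * B.gen ^ 2) = 4 := by
    rw [norm_of_gen_pow_three_eq_five hdim hgen 9 5 3 (by push_cast; ring)]; norm_num
  exact isPrincipal_of_absNorm_eq_natAbs_norm (by simp [hP]) hπ (by simp [hP, hnorm])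

lemma isPrincipal_of_absNorm_eq_five (hdim : B.dim = 3) (hgen : B.gen ^ 3 = 5)
    (hP : Ideal.absNorm P = 5) : P.IsPrincipal := by
  have hprime : P.IsPrime := inferInstance
  have h5 : B.gen ^ 3 ∈ P := by simpa [hP, hgen] using Ideal.absNorm_mem P
  have hnorm : Algebra.norm ℤ B.gen = 5 := by
    rw [norm_of_gen_pow_three_eq_five hdim hgen 0 1 0 (by push_cast; ring)]; norm_num
  exact isPrincipal_of_absNorm_eq_natAbs_norm (by simp [hP])
    (hprime.mem_of_pow_mem 3 h5) (by simp [hP, hnorm])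

lemma absNorm_ne_seven {θ : S} (hθ : θ ^ 3 = 5) : Ideal.absNorm P ≠ 7 := fun hP ↦ by
  have h7 : (7 : S) ∈ P := by simpa [hP] using Ideal.absNorm_mem P
  have hfermat : θ ^ 7 - θ ∈ P := hP ▸ pow_absNorm_sub_mem P θ
  -- In a field with seven elements `θ = θ ^ 7 = 25 * θ`, that is `3 * θ = 0`.
  have hmem : θ ∈ P := by
    rw [show θ = 5 * (θ ^ 7 - θ) - 17 * θ * 7 by linear_combination -(5 * θ ^ 4 + 25 * θ) * hθ]
    exact sub_mem (P.mul_mem_left _ hfermat) (P.mul_mem_left _ h7)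
  have h5 : (5 : S) ∈ P := hθ ▸ P.pow_mem_of_mem hmem 3 three_pos
  refine (Ideal.ne_top_iff_one P).1 (Ideal.IsMaximal.ne_top ‹_›) ?_
  rw [show (1 : S) = 3 * 5 - 2 * 7 by norm_num]
  exact sub_mem (P.mul_mem_left _ h5) (P.mul_mem_left _ h7)

lemma isPrincipal_of_absNorm_lt_eight (hdim : B.dim = 3) (hgen : B.gen ^ 3 = 5)
    (hP : Ideal.absNorm P < 8) : P.IsPrincipal := by
  obtain ⟨p, n, hn, -, hp, hnorm⟩ := Ideal.exists_prime_and_absNorm_eq_pow P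
  have hpow : IsPrimePow (Ideal.absNorm P) := hnorm ▸ hp.isPrimePow.pow hn.ne'
  have hcases : Ideal.absNorm P ∈ ({2, 3, 4, 5, 7} : Set ℕ) := by
    interval_cases Ideal.absNorm P <;> first | exact absurd hpow (by decide) | simp
  rcases hcases with h | h | h | h | h
  · exact isPrincipal_of_absNorm_eq_two hdim hgen h
  · exact isPrincipal_of_absNorm_eq_three hdim hgen h
  · exact isPrincipal_of_absNorm_eq_four hdim hgen h
  · exact isPrincipal_of_absNorm_eq_five hdim hgen h
  · exact absurd h (absNorm_ne_seven hgen)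

lemma minkowski_lt_eight {K : Type*} [Field K] [NumberField K] (hK : Module.finrank ℚ K = 3)
    (hdiscr : NumberField.discr K = -675) :
    (4 / Real.pi) ^ InfinitePlace.nrComplexPlaces K * ((Module.finrank ℚ K).factorial /
      (Module.finrank ℚ K) ^ (Module.finrank ℚ K) * √|NumberField.discr K|) < 8 := by
  have hplaces : InfinitePlace.nrComplexPlaces K ≤ 1 := by
    have := InfinitePlace.card_add_two_mul_card_eq_rank K
    omega
  have hpi : (4 / Real.pi) ^ InfinitePlace.nrComplexPlaces K ≤ 4 / 3 :=
    calc (4 / Real.pi) ^ InfinitePlace.nrComplexPlaces K ≤ (4 / Real.pi) ^ 1 :=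
          pow_le_pow_right₀ ((one_le_div Real.pi_pos).2 Real.pi_le_four) hplaces
      _ ≤ 4 / 3 := by rw [pow_one]; gcongr; exact Real.pi_gt_three.le
  have hsqrt : √|(NumberField.discr K : ℝ)| ≤ 26 := by
    rw [hdiscr, Real.sqrt_le_left (by norm_num)]; norm_num
  calc _ ≤ 4 / 3 * (((3).factorial : ℝ) / ((3 : ℕ) : ℝ) ^ 3 * 26) := by
        rw [hK]; gcongr
    _ < 8 := by norm_num [Nat.factorial]

theorem isPrincipalIdealRing_of_gen_pow_three_eq_five {K : Type*} [Field K] [NumberField K]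
    {B : PowerBasis ℚ K} (hgen : B.gen ^ 3 = 5) : IsPrincipalIdealRing (𝓞 K) := by
  obtain ⟨B', hdim', hgen'⟩ : ∃ B' : PowerBasis ℤ (𝓞 K), B'.dim = 3 ∧ B'.gen ^ 3 = 5 := by
    simpa using exists_powerBasis_ringOfIntegers (p := 5) (by norm_num) (by norm_num)
      (by simpa using hgen)
  have hdiscr : NumberField.discr K = -675 := by
    rw [← NumberField.discr_eq_discr K B'.basis,
      discr_pureCubic (m := (5 : ℤ)) hdim' (by simpa using hgen')]
    norm_num
  have hrank : Module.finrank ℚ K = 3 := by rw [← RingOfIntegers.rank, B'.finrank, hdim']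
  refine RingOfIntegers.isPrincipalIdealRing_of_isPrincipal_of_norm_le_of_isPrime
    fun P hP hle ↦ ?_
  have : (P : Ideal (𝓞 K)).IsMaximal := hP.isMaximal (nonZeroDivisors.coe_ne_zero P)
  exact isPrincipal_of_absNorm_lt_eight hdim' hgen'
    (by exact_mod_cast hle.trans_lt (minkowski_lt_eight hrank hdiscr))

end ClassNumberOne

section SplittingField

open IntermediateField

variable {E : Type*} [Field E] [NumberField E]

lemma isPrimitiveRoot_div {K : Type*} [Field K] {n : ℕ} (hn : n.Prime) {a b c : K} (hc : c ≠ 0)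
    (ha : a ^ n = c) (hb : b ^ n = c) (hab : a ≠ b) : IsPrimitiveRoot (b / a) n := by
  have ha0 : a ≠ 0 := by rintro rfl; exact hc (by rw [← ha, zero_pow hn.ne_zero])
  have := Fact.mk hn
  have horder : orderOf (b / a) = n :=
    orderOf_eq_prime (by rw [div_pow, ha, hb, div_self hc]) fun h ↦
      hab ((div_eq_one_iff_eq ha0).1 h).symm
  exact horder ▸ IsPrimitiveRoot.orderOf (b / a)

lemma separable_X_pow_three_sub_C_five : (X ^ 3 - C 5 : ℚ[X]).Separable :=
  separable_X_pow_sub_C 5 (by norm_num) (by norm_num)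

lemma exists_ne_pow_three_eq_five (hsplit : IsSplittingField ℚ E (X ^ 3 - C 5)) :
    ∃ a b : E, a ^ 3 = 5 ∧ b ^ 3 = 5 ∧ a ≠ b := by
  have hmem {x : E} (hx : x ∈ (X ^ 3 - C 5 : ℚ[X]).rootSet E) : x ^ 3 = 5 := by
    simpa [sub_eq_zero] using aeval_eq_zero_of_mem_rootSet hx
  have hcard := card_rootSet_eq_natDegree separable_X_pow_three_sub_C_five hsplit.splits
  rw [natDegree_X_pow_sub_C] at hcard
  obtain ⟨⟨a, ha⟩, ⟨b, hb⟩, hab⟩ :=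
    Fintype.exists_pair_of_one_lt_card (hcard ▸ (by norm_num : 1 < 3))
  exact ⟨a, b, hmem ha, hmem hb, fun h ↦ hab (Subtype.ext h)⟩

lemma finrank_adjoin_cubeRoot {a : E} (ha : a ^ 3 = 5) : Module.finrank ℚ ℚ⟮a⟯ = 3 := by
  rw [adjoin.finrank (Algebra.IsIntegral.isIntegral a), minpoly_rat_eq_X_pow_sub_C (p := 5)
    (by norm_num) three_ne_zero (by exact_mod_cast ha), natDegree_X_pow_sub_C]

lemma isPrincipalIdealRing_adjoin_cubeRoot {a : E} (ha : a ^ 3 = 5) :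
    IsPrincipalIdealRing (𝓞 ℚ⟮a⟯) :=
  isPrincipalIdealRing_of_gen_pow_three_eq_five
    (B := adjoin.powerBasis (Algebra.IsIntegral.isIntegral a)) (Subtype.ext ha)

lemma finrank_adjoin_primitiveRoot {ω : E} (hω : IsPrimitiveRoot ω 3) :
    Module.finrank ℚ ℚ⟮ω⟯ = 2 := by
  have : IsCyclotomicExtension {3} ℚ ℚ⟮ω⟯ := hω.intermediateField_adjoin_isCyclotomicExtension ℚ
  exact IsCyclotomicExtension.finrank (n := 3) _ (cyclotomic.irreducible_rat three_pos)

lemma isPrincipalIdealRing_adjoin_primitiveRoot {ω : E} (hω : IsPrimitiveRoot ω 3) :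
    IsPrincipalIdealRing (𝓞 ℚ⟮ω⟯) :=
  have : IsCyclotomicExtension {3} ℚ ℚ⟮ω⟯ := hω.intermediateField_adjoin_isCyclotomicExtension ℚ
  IsCyclotomicExtension.Rat.three_pid ℚ⟮ω⟯

lemma adjoin_cubeRoot_ne {a b : E} (ha : a ^ 3 = 5) (hb : b ^ 3 = 5) (hab : a ≠ b) :
    ℚ⟮a⟯ ≠ ℚ⟮b⟯ := fun h ↦ by
  have hω := isPrimitiveRoot_div Nat.prime_three (by norm_num) ha hb hab
  have hle : ℚ⟮b / a⟯ ≤ ℚ⟮a⟯ := adjoin_simple_le_iff.2 <|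
    div_mem (h ▸ mem_adjoin_simple_self ℚ b) (mem_adjoin_simple_self ℚ a)
  have hdvd := finrank_dvd_of_le_right hle
  rw [finrank_adjoin_primitiveRoot hω, finrank_adjoin_cubeRoot ha] at hdvd
  norm_num at hdvd

theorem classGroup_pow_three_eq_one [IsGalois ℚ E] (hdeg : Module.finrank ℚ E = 6) {a b : E}
    (ha : a ^ 3 = 5) (hb : b ^ 3 = 5) (hab : a ≠ b) (c : ClassGroup (𝓞 E)) : c ^ 3 = 1 := by
  have hω := isPrimitiveRoot_div Nat.prime_three (by norm_num) ha hb hab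
  have := isPrincipalIdealRing_adjoin_cubeRoot ha
  have := isPrincipalIdealRing_adjoin_cubeRoot hb
  have := isPrincipalIdealRing_adjoin_primitiveRoot hω
  have htwo {x : E} (hx : x ^ 3 = 5) : Module.finrank ℚ⟮x⟯ E = 2 := by
    have := Module.finrank_mul_finrank ℚ ℚ⟮x⟯ E
    rw [finrank_adjoin_cubeRoot hx, hdeg] at this
    omega
  have hthree : Module.finrank ℚ⟮b / a⟯ E = 3 := by
    have := Module.finrank_mul_finrank ℚ ℚ⟮b / a⟯ E
    rw [finrank_adjoin_primitiveRoot hω, hdeg] at this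
    omega
  rw [← hthree]
  exact classGroup_pow_finrank_eq_one (adjoin_cubeRoot_ne ha hb hab) (htwo ha) (htwo hb)
    (finrank_adjoin_primitiveRoot hω) (hthree ▸ Nat.prime_three) (hthree ▸ by decide) c

end SplittingField

end CubicFive

/-- The splitting field `E = ℚ(ζ₃, ∛5)` of `x³ − 5`, of degree 6 over `ℚ`,
has odd class number. -/
theorem classNumber_splittingField_cubic_five_odd
    (E : Type) [Field E] [NumberField E]
    (hsplit : IsSplittingField ℚ E (X ^ 3 - C 5))
    (hdeg : Module.finrank ℚ E = 6) :
    Odd (NumberField.classNumber E) := by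
  have : IsGalois ℚ E :=
    .of_separable_splitting_field CubicFive.separable_X_pow_three_sub_C_five
  obtain ⟨a, b, ha, hb, hab⟩ := CubicFive.exists_ne_pow_three_eq_five hsplit
  rw [← Nat.not_even_iff_odd, even_iff_two_dvd, NumberField.classNumber]
  intro htwo
  obtain ⟨c, hc⟩ := exists_prime_orderOf_dvd_card 2 htwo
  have hdvd : orderOf c ∣ 3 :=
    orderOf_dvd_of_pow_eq_one (CubicFive.classGroup_pow_three_eq_one hdeg ha hb hab c)
  rw [hc] at hdvd
  norm_num at hdvd
end

section
/- The class number of the number field ℚ(i, √7) = ℚ(μ_4, √7), a degree 4 extension of ℚ obtained by adjoining a primitive 4th root of unity and a square root of 7, is equal to 1. -/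
open NumberField

/-!
Let `i ^ 2 = -1` and `w = (1 + √-7) / 2` with `√-7 = i√7`, so that `w ^ 2 = w - 2`. Since `-7` is
not a square in `ℚ(i)`, the integers `1, i, w, iw` form a `ℚ`-basis of `K`, and the tower formula
gives it discriminant `(-4) ^ 2 * N(-7) = 784 = 28 ^ 2`. Whether it is an integral basis does not
matter: `|discr K| ≤ 784` already makes the Minkowski bound at most
`(4 / π) ^ 2 * (4! / 4 ^ 4) * 28 < 5`, so it suffices to see that every nonzero prime ideal `P` of
norm at most `4` is principal. As `-1` is a square in the residue field of `P`, its norm is not `3`,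
and hence `2 ∈ P`. Since `2 = i (i - 1) ^ 2` and `i - 1 = (1 + iw)(1 + i(1 - w))`, the ideal `P`
contains `1 + iw` or its conjugate `1 + i(1 - w)`. Both elements have norm `2`, so `P` is generated
by one of them.
-/

namespace BiquadraticField

section Tower
open Algebra Matrix Kronecker

variable {R S T ι κ : Type*} [CommRing R] [CommRing S] [CommRing T] [Algebra R S] [Algebra S T]
  [Algebra R T] [IsScalarTower R S T] [Fintype ι] [Fintype κ] [DecidableEq ι] [DecidableEq κ]

theorem traceMatrix_smulTower' (b : Module.Basis ι R S) (c : Module.Basis κ S T) :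
    traceMatrix R (b.smulTower' c) = ((1 : Matrix κ κ R) ⊗ₖ traceMatrix R b) *
      ((traceMatrix S c).map (leftMulMatrix b)).comp κ κ ι ι R := by
  ext ⟨k, i⟩ ⟨l, j⟩
  have trace_mul_mul (s : S) : trace R S (b i * (s * b j)) =
      ∑ m, trace R S (b i * b m) * b.repr (s * b j) m := by
    conv_lhs => rw [← b.sum_repr (s * b j), Finset.mul_sum, map_sum]
    simp [mul_comm]
  calc
    traceMatrix R (b.smulTower' c) (k, i) (l, j)
        = trace R T ((b i * b j) • (c k * c l)) := by
      rw [traceMatrix_apply, traceForm_apply, b.smulTower'_apply, b.smulTower'_apply,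
        smul_mul_smul_comm]
    _ = trace R S (b i * (trace S T (c k * c l) * b j)) := by
      rw [← trace_trace_of_basis b c, map_smul, smul_eq_mul]
      ring_nf
    _ = _ := by
      simp [trace_mul_mul, mul_apply, Fintype.sum_prod_type, one_apply, leftMulMatrix_eq_repr_mul]

theorem discr_smulTower' (b : Module.Basis ι R S) (c : Module.Basis κ S T) :
    discr R (b.smulTower' c) = discr R b ^ Fintype.card κ * norm R (discr S c) := by
  simp only [discr_def, traceMatrix_smulTower', det_mul, det_kronecker, det_one, one_pow, one_mul,
    norm_eq_matrix_det b]
  congr 1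
  exact (det_det _ (leftMulMatrix b).toRingHom).symm

end Tower

section Quadratic
open Algebra IntermediateField Polynomial

section Ring
variable {R S : Type*} [CommRing R] [CommRing S] [Algebra R S]

theorem isIntegral_of_sq_eq {x : S} {t n : R} (hx : x ^ 2 = t • x - n • 1) : IsIntegral R x := by
  refine ⟨.X ^ 2 - .C t * .X + .C n, by monicity!, ?_⟩
  simp [hx, Algebra.smul_def]

variable {b : Module.Basis (Fin 2) R S} {w : S} {t n : R}

theorem leftMulMatrix_eq_of_sq_eq (hb : ⇑b = ![1, w]) (hw : w ^ 2 = t • w - n • 1) (x y : R) :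
    leftMulMatrix b (x • 1 + y • w) = !![x, -(n * y); y, x + t * y] := by
  have mul_basis_zero : (x • 1 + y • w) * b 0 = x • b 0 + y • b 1 := by simp [hb]
  have mul_basis_one : (x • 1 + y • w) * b 1 = (-(n * y)) • b 0 + (x + t * y) • b 1 := by
    simp only [hb, Matrix.cons_val, Algebra.smul_def, map_neg, map_add, map_mul] at hw ⊢
    linear_combination algebraMap R S y * hw
  ext i j
  fin_cases i <;> fin_cases j <;> simp [leftMulMatrix_eq_repr_mul, mul_basis_zero, mul_basis_one]

theorem norm_eq_of_sq_eq (hb : ⇑b = ![1, w]) (hw : w ^ 2 = t • w - n • 1) (x y : R) :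
    norm R (x • 1 + y • w) = x ^ 2 + t * x * y + n * y ^ 2 := by
  rw [norm_eq_matrix_det b, leftMulMatrix_eq_of_sq_eq hb hw, Matrix.det_fin_two_of]
  ring

theorem trace_eq_of_sq_eq (hb : ⇑b = ![1, w]) (hw : w ^ 2 = t • w - n • 1) (x y : R) :
    trace R S (x • 1 + y • w) = 2 * x + t * y := by
  rw [trace_eq_matrix_trace b, leftMulMatrix_eq_of_sq_eq hb hw, Matrix.trace_fin_two_of]
  ring

theorem discr_eq_of_sq_eq (hb : ⇑b = ![1, w]) (hw : w ^ 2 = t • w - n • 1) :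
    discr R b = t ^ 2 - 4 * n := by
  have trace_one : trace R S 1 = 2 := by simpa using trace_eq_of_sq_eq hb hw 1 0
  have trace_w : trace R S w = t := by simpa using trace_eq_of_sq_eq hb hw 0 1
  have trace_w_sq : trace R S (w * w) = t ^ 2 - 2 * n := by
    rw [← sq, hw, map_sub, map_smul, map_smul, trace_w, trace_one, smul_eq_mul, smul_eq_mul]
    ring
  rw [discr_def, Matrix.det_fin_two]
  simp only [traceMatrix_apply, traceForm_apply, hb, Matrix.cons_val, one_mul, mul_one, trace_one,
    trace_w, trace_w_sq]
  ring

end Ring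

section Field
variable {F S : Type*} [Field F] [CommRing S] [Algebra F S]

theorem exists_basis_eq_of_finrank_eq_two [Nontrivial S] (h : Module.finrank F S = 2) {w : S}
    (hw : w ∉ Set.range (algebraMap F S)) : ∃ b : Module.Basis (Fin 2) F S, ⇑b = ![1, w] := by
  have hli : LinearIndependent F ![1, w] := by
    refine LinearIndependent.pair_iff' one_ne_zero |>.mpr fun a ha => hw ⟨a, ?_⟩
    rw [← ha, Algebra.algebraMap_eq_smul_one]
  exact ⟨basisOfLinearIndependentOfCardEqFinrank hli (by simp [h]),
    coe_basisOfLinearIndependentOfCardEqFinrank _ _⟩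

theorem notMem_range_of_sq_eq [Nontrivial S] {w : S} {t n : F} (hw : w ^ 2 = t • w - n • 1)
    (hd : ¬IsSquare (t ^ 2 - 4 * n)) : w ∉ Set.range (algebraMap F S) := by
  rintro ⟨x, rfl⟩
  have hx : x ^ 2 = t * x - n := by
    apply FaithfulSMul.algebraMap_injective F S
    simpa [Algebra.smul_def] using hw
  exact hd ⟨2 * x - t, by linear_combination -4 * hx⟩

theorem isSquare_or_isSquare_mul_of_isSquare_algebraMap (h2 : (2 : F) ≠ 0)
    {b : Module.Basis (Fin 2) F S} {w : S} {a c : F} (hb : ⇑b = ![1, w])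
    (hw : w ^ 2 = algebraMap F S a) (hc : IsSquare (algebraMap F S c)) :
    IsSquare c ∨ IsSquare (a * c) := by
  obtain ⟨z, hz⟩ := hc
  obtain ⟨x, y, rfl⟩ : ∃ x y : F, z = x • 1 + y • w :=
    ⟨b.repr z 0, b.repr z 1, by simpa [Fin.sum_univ_two, hb] using (b.sum_repr z).symm⟩
  have hw' : w ^ 2 = (0 : F) • w - (-a) • 1 := by simp [hw, Algebra.smul_def]
  have hmat := congrArg (leftMulMatrix b) hz
  rw [map_mul, leftMulMatrix_eq_of_sq_eq hb hw', AlgHom.commutes] at hmat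
  have hre : c = x * x + a * y * y := by
    simpa [Matrix.algebraMap_matrix_apply] using congrFun₂ hmat 0 0
  have him : 0 = y * x + x * y := by
    simpa [Matrix.algebraMap_matrix_apply] using congrFun₂ hmat 1 0
  obtain rfl | rfl : x = 0 ∨ y = 0 := by
    have : 2 * (x * y) = 0 := by linear_combination -him
    simpa [h2] using this
  · exact .inr ⟨a * y, by rw [hre]; ring⟩
  · exact .inl ⟨x, by rw [hre]; ring⟩

theorem finrank_adjoin_of_sq_eq {K : Type*} [Field K] [Algebra F K] {w : K} {t n : F}
    (hw : w ^ 2 = t • w - n • 1) (hd : ¬IsSquare (t ^ 2 - 4 * n)) :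
    Module.finrank F F⟮w⟯ = 2 := by
  have hint := isIntegral_of_sq_eq hw
  rw [IntermediateField.adjoin.finrank hint]
  refine le_antisymm ?_ ((minpoly.two_le_natDegree_iff hint).mpr (notMem_range_of_sq_eq hw hd))
  have hmonic : (.X ^ 2 - .C t * .X + .C n : F[X]).Monic := by monicity!
  calc
    (minpoly F w).natDegree ≤ (.X ^ 2 - .C t * .X + .C n : F[X]).natDegree :=
      Polynomial.natDegree_le_natDegree <|
        minpoly.min F w hmonic (by simp [hw, Algebra.smul_def])
    _ = 2 := by compute_degree!

end Field

section QuadraticTower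
variable {k F K : Type*} [CommRing k] [CommRing F] [CommRing K] [Algebra k F]
  [Algebra F K] [Algebra k K] [IsScalarTower k F K] {b : Module.Basis (Fin 2) k F}
  {c : Module.Basis (Fin 2) F K} {α : F} {w : K} {a t n : k}

theorem discr_smulTower'_of_sq_eq (hb : ⇑b = ![1, α]) (hc : ⇑c = ![1, w])
    (hα : α ^ 2 = algebraMap k F a) (hw : w ^ 2 = t • w - n • 1) :
    discr k (b.smulTower' c) = (4 * a * (t ^ 2 - 4 * n)) ^ 2 := by
  have hα' : α ^ 2 = (0 : k) • α - (-a) • 1 := by simp [hα, Algebra.smul_def]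
  have hw' : w ^ 2 = algebraMap k F t • w - algebraMap k F n • 1 := by simpa using hw
  have hdisc : algebraMap k F t ^ 2 - 4 * algebraMap k F n = algebraMap k F (t ^ 2 - 4 * n) := by
    rw [map_sub, map_pow, map_mul, map_ofNat]
  rw [discr_smulTower', discr_eq_of_sq_eq hb hα', discr_eq_of_sq_eq hc hw', hdisc,
    norm_algebraMap_of_basis b, Fintype.card_fin]
  ring

theorem norm_one_add_mul_of_sq_eq (hb : ⇑b = ![1, α]) (hc : ⇑c = ![1, w])
    (hα : α ^ 2 = algebraMap k F a) (hw : w ^ 2 = t • w - n • 1) :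
    norm k (1 + algebraMap F K α * w) = (1 + a * n) ^ 2 - a * t ^ 2 := by
  have hα' : α ^ 2 = (0 : k) • α - (-a) • 1 := by simp [hα, Algebra.smul_def]
  have hw' : w ^ 2 = algebraMap k F t • w - algebraMap k F n • 1 := by simpa using hw
  have norm_F : norm F (1 + algebraMap F K α * w) = (1 + a * n) • 1 + t • α := by
    have := norm_eq_of_sq_eq hc hw' 1 α
    rw [one_smul, Algebra.smul_def] at this
    rw [this, hα]
    simp only [Algebra.smul_def, map_add, map_mul, map_one]
    ring
  have : Module.Free k F := .of_basis b
  have : Module.Finite k F := .of_basis b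
  have : Module.Free F K := .of_basis c
  have : Module.Finite F K := .of_basis c
  rw [← norm_norm (S := F), norm_F, norm_eq_of_sq_eq hb hα']
  ring

end QuadraticTower

theorem exists_basis_adjoin_of_sq_eq {k K : Type*} [Field k] [Field K] [Algebra k K]
    (h2 : (2 : k) ≠ 0) (hdeg : Module.finrank k K = 4) {α w : K} {a t n : k}
    (hα : α ^ 2 = algebraMap k K a) (hw : w ^ 2 = t • w - n • 1) (ha : ¬IsSquare a)
    (hd : ¬IsSquare (t ^ 2 - 4 * n)) (had : ¬IsSquare (a * (t ^ 2 - 4 * n))) :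
    ∃ (b : Module.Basis (Fin 2) k k⟮α⟯) (c : Module.Basis (Fin 2) k⟮α⟯ K),
      ⇑b = ![1, AdjoinSimple.gen k α] ∧ ⇑c = ![1, w] := by
  set γ := AdjoinSimple.gen k α
  have hα' : α ^ 2 = (0 : k) • α - (-a) • 1 := by simp [hα, Algebra.smul_def]
  have hγ : γ ^ 2 = algebraMap k k⟮α⟯ a := Subtype.ext hα
  have hγ' : γ ^ 2 = (0 : k) • γ - (-a) • 1 := by simp [hγ, Algebra.smul_def]
  have hdisc : ¬IsSquare ((0 : k) ^ 2 - 4 * -a) := fun ⟨x, hx⟩ =>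
    ha ⟨x / 2, by field_simp; linear_combination hx⟩
  have hrank : Module.finrank k k⟮α⟯ = 2 := finrank_adjoin_of_sq_eq hα' hdisc
  obtain ⟨b, hb⟩ := exists_basis_eq_of_finrank_eq_two hrank (notMem_range_of_sq_eq hγ' hdisc)
  have hrank' : Module.finrank k⟮α⟯ K = 2 := by
    have := Module.finrank_mul_finrank k k⟮α⟯ K
    rw [hrank, hdeg] at this
    omega
  have hw' : w ^ 2 = algebraMap k k⟮α⟯ t • w - algebraMap k k⟮α⟯ n • 1 := by simpa using hw
  have hdisc' : ¬IsSquare (algebraMap k k⟮α⟯ t ^ 2 - 4 * algebraMap k k⟮α⟯ n) := fun h => by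
    rw [← map_ofNat (algebraMap k k⟮α⟯) 4, ← map_pow, ← map_mul, ← map_sub] at h
    exact (isSquare_or_isSquare_mul_of_isSquare_algebraMap h2 hb hγ h).elim hd had
  obtain ⟨c, hc⟩ := exists_basis_eq_of_finrank_eq_two hrank' (notMem_range_of_sq_eq hw' hdisc')
  exact ⟨b, c, hb, hc⟩

end Quadratic

section Minkowski
open NumberField.InfinitePlace Module Real Nat
variable {K : Type*} [Field K] [NumberField K]

theorem exists_discr_eq_sq_mul_of_isIntegral {ι : Type*} [Fintype ι] [DecidableEq ι]
    {v : Basis ι ℚ K} (hv : ∀ i, IsIntegral ℤ (v i)) :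
    ∃ m : ℤ, Algebra.discr ℚ v = m ^ 2 * discr K := by
  let B := integralBasis K
  let B' := B.reindex (B.indexEquiv v)
  have hint : IsIntegral ℤ (B'.toMatrix v).det := IsIntegral.det fun i j => by
    obtain ⟨x, hx⟩ : ∃ x : 𝓞 K, (x : K) = v j := ⟨⟨v j, hv j⟩, rfl⟩
    rw [Basis.toMatrix_apply, ← hx, B.repr_reindex_apply, integralBasis_repr_apply]
    exact isIntegral_algebraMap
  obtain ⟨m, hm⟩ := IsIntegrallyClosed.isIntegral_iff.mp hint
  refine ⟨m, ?_⟩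
  rw [← B'.toMatrix_map_vecMul v, Algebra.discr_of_matrix_vecMul, ← hm, Basis.coe_reindex,
    Algebra.discr_reindex, coe_discr, eq_intCast]

theorem abs_discr_le_of_isIntegral {ι : Type*} [Fintype ι] [DecidableEq ι]
    {v : Basis ι ℚ K} (hv : ∀ i, IsIntegral ℤ (v i)) :
    |(discr K : ℚ)| ≤ |Algebra.discr ℚ v| := by
  obtain ⟨m, hm⟩ := exists_discr_eq_sq_mul_of_isIntegral hv
  have hm0 : m ≠ 0 := by
    rintro rfl
    exact Algebra.discr_not_zero_of_basis ℚ v (by simpa using hm)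
  have hm1 : (1 : ℚ) ≤ m ^ 2 := by exact_mod_cast Int.add_one_le_of_lt (sq_pos_of_ne_zero hm0)
  rw [hm, abs_mul, abs_sq]
  exact le_mul_of_one_le_left (abs_nonneg _) hm1

theorem nrComplexPlaces_le_finrank_div_two : nrComplexPlaces K ≤ finrank ℚ K / 2 := by
  have := card_add_two_mul_card_eq_rank K
  omega

theorem isPrincipalIdealRing_of_abs_discr_le {n N : ℕ} {d : ℝ} (hn : finrank ℚ K = n)
    (hd : |(discr K : ℝ)| ≤ d) (hN : (4 / π) ^ (n / 2) * (n ! / n ^ n * √d) < N + 1)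
    (h : ∀ P : Ideal (𝓞 K), P.IsPrime → P ≠ ⊥ → P.absNorm ≤ N → P.IsPrincipal) :
    IsPrincipalIdealRing (𝓞 K) := by
  refine RingOfIntegers.isPrincipalIdealRing_of_isPrincipal_of_norm_le_of_isPrime
    fun P hP hle => h P hP (nonZeroDivisors.coe_ne_zero P) ?_
  have one_le : 1 ≤ 4 / π := (one_le_div pi_pos).mpr pi_le_four
  have absNorm_lt : ((P : Ideal (𝓞 K)).absNorm : ℝ) < N + 1 := by
    refine lt_of_le_of_lt (hle.trans ?_) hN
    rw [hn]
    gcongr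
    exact hn ▸ nrComplexPlaces_le_finrank_div_two
  exact Nat.lt_succ_iff.mp (by exact_mod_cast absNorm_lt)

end Minkowski

section Ideal
variable {R : Type*} [CommRing R] [IsDedekindDomain R] [Module.Free ℤ R]

theorem eq_span_singleton_of_mem_of_prime_absNorm {P : Ideal R} (hP : P ≠ ⊤) {x : R} (hx : x ∈ P)
    (hp : (Ideal.span {x}).absNorm.Prime) : P = Ideal.span {x} := by
  have hprime : (Ideal.span {x}).IsPrime := Ideal.isPrime_of_irreducible_absNorm hp
  have hmax : (Ideal.span {x}).IsMaximal := hprime.isMaximal fun h => by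
    simp [h, Nat.not_prime_zero] at hp
  exact (hmax.eq_of_le hP ((Ideal.span_singleton_le_iff_mem _).mpr hx)).symm

theorem absNorm_mod_four_ne_three {i : R} (hi : i ^ 2 = -1) {P : Ideal R} (hP : P.IsMaximal) :
    P.absNorm % 4 ≠ 3 := by
  intro hmod
  rw [Ideal.absNorm_apply, Submodule.cardQuot_apply] at hmod
  let := Ideal.Quotient.field P
  have : Finite (R ⧸ P) := Nat.finite_of_card_ne_zero fun h => by simp [h] at hmod
  let := Fintype.ofFinite (R ⧸ P)
  have hsq : IsSquare (-1 : R ⧸ P) := ⟨Ideal.Quotient.mk P i, by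
    rw [← map_mul, ← sq, hi, map_neg, map_one]⟩
  rw [Nat.card_eq_fintype_card] at hmod
  exact FiniteField.isSquare_neg_one_iff.mp hsq hmod

theorem two_mem_of_absNorm_le_four [Module.Finite ℤ R] {i : R} (hi : i ^ 2 = -1) {P : Ideal R}
    (hP : P.IsMaximal) (hP0 : P ≠ ⊥) (hle : P.absNorm ≤ 4) : (2 : R) ∈ P := by
  have hmem := P.absNorm_mem
  have ne_zero : P.absNorm ≠ 0 := Ideal.absNorm_eq_zero_iff.not.mpr hP0
  have ne_one : P.absNorm ≠ 1 := Ideal.absNorm_eq_one_iff.not.mpr hP.ne_top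
  have ne_three := absNorm_mod_four_ne_three hi hP
  obtain h | h : P.absNorm = 2 ∨ P.absNorm = 4 := by omega
  · simpa [h] using hmem
  · have : (2 : R) ^ 2 ∈ P := by
      convert hmem
      norm_num [h]
    exact hP.isPrime.mem_of_pow_mem 2 this

theorem one_add_mul_mem_of_two_mem {R : Type*} [CommRing R] {i w : R} (hi : i ^ 2 = -1)
    (hw : w ^ 2 = w - 2) {P : Ideal R} (hP : P.IsPrime) (h2 : (2 : R) ∈ P) :
    1 + i * w ∈ P ∨ 1 + i * (1 - w) ∈ P := by
  refine hP.mem_or_mem (hP.mem_of_pow_mem 2 ?_)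
  have : ((1 + i * w) * (1 + i * (1 - w))) ^ 2 = -i * 2 := by
    have hprod : (1 + i * w) * (1 + i * (1 - w)) = i - 1 := by
      linear_combination (w - w ^ 2) * hi + hw
    rw [hprod]
    linear_combination hi
  rw [this]
  exact P.mul_mem_left _ h2

end Ideal

section NumberField
open IntermediateField
variable {K : Type*} [Field K] [NumberField K]

theorem exists_basis_adjoin_i (hdeg : Module.finrank ℚ K = 4) {i w : K} (hi : i ^ 2 = -1)
    (hw : w ^ 2 = w - 2) :
    ∃ (b : Module.Basis (Fin 2) ℚ ℚ⟮i⟯) (c : Module.Basis (Fin 2) ℚ⟮i⟯ K),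
      ⇑b = ![1, AdjoinSimple.gen ℚ i] ∧ ⇑c = ![1, w] := by
  have not_isSquare_seven : ¬IsSquare (7 : ℚ) := fun h =>
    Nat.prime_seven.prime.not_isSquare (Rat.isSquare_natCast_iff.mp (by exact_mod_cast h))
  have not_isSquare_of_neg {q : ℚ} (hq : q < 0) : ¬IsSquare q := fun h => hq.not_ge h.nonneg
  exact exists_basis_adjoin_of_sq_eq two_ne_zero hdeg (a := -1) (t := 1) (n := 2)
    (by simpa using hi) (by simpa [Algebra.smul_def] using hw) (not_isSquare_of_neg (by norm_num))
    (not_isSquare_of_neg (by norm_num)) (by norm_num [not_isSquare_seven])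

theorem abs_discr_le (hdeg : Module.finrank ℚ K = 4) {i w : K} (hi : i ^ 2 = -1)
    (hw : w ^ 2 = w - 2) : |(discr K : ℚ)| ≤ 784 := by
  obtain ⟨b, c, hb, hc⟩ := exists_basis_adjoin_i hdeg hi hw
  have hγ : AdjoinSimple.gen ℚ i ^ 2 = algebraMap ℚ ℚ⟮i⟯ (-1) := Subtype.ext (by simpa using hi)
  have hw' : w ^ 2 = (1 : ℚ) • w - (2 : ℚ) • 1 := by simpa [Algebra.smul_def] using hw
  have isIntegral_i : IsIntegral ℤ i := isIntegral_of_sq_eq (t := 0) (n := 1) (by simpa using hi)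
  have isIntegral_w : IsIntegral ℤ w := isIntegral_of_sq_eq (t := 1) (n := 2) (by simpa using hw)
  have isIntegral_basis (j : Fin 2 × Fin 2) : IsIntegral ℤ (b.smulTower' c j) := by
    rw [b.smulTower'_apply, Algebra.smul_def, hb, hc]
    fin_cases j <;> simp [isIntegral_one, isIntegral_i, isIntegral_w, IsIntegral.mul]
  calc
    |(discr K : ℚ)| ≤ |Algebra.discr ℚ (b.smulTower' c)| :=
      abs_discr_le_of_isIntegral isIntegral_basis
    _ = 784 := by
      rw [discr_smulTower'_of_sq_eq hb hc hγ hw']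
      norm_num

theorem absNorm_span_one_add_mul (hdeg : Module.finrank ℚ K = 4) {i w : 𝓞 K} (hi : i ^ 2 = -1)
    (hw : w ^ 2 = w - 2) : (Ideal.span {1 + i * w}).absNorm = 2 := by
  have hiK : (i : K) ^ 2 = -1 := by simpa using congrArg (algebraMap (𝓞 K) K) hi
  have hwK : (w : K) ^ 2 = w - 2 := by
    simpa only [map_pow, map_sub, map_ofNat] using congrArg (algebraMap (𝓞 K) K) hw
  obtain ⟨b, c, hb, hc⟩ := exists_basis_adjoin_i hdeg hiK hwK
  have hγ : AdjoinSimple.gen ℚ (i : K) ^ 2 = algebraMap ℚ ℚ⟮(i : K)⟯ (-1) :=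
    Subtype.ext (by simpa using hiK)
  have hw' : (w : K) ^ 2 = (1 : ℚ) • (w : K) - (2 : ℚ) • 1 := by
    simpa [Algebra.smul_def] using hwK
  have norm_eq : Algebra.norm ℚ ((1 + i * w : 𝓞 K) : K) = 2 := by
    calc
      Algebra.norm ℚ ((1 + i * w : 𝓞 K) : K) = (1 + -1 * 2) ^ 2 - -1 * 1 ^ 2 := by
        simpa using norm_one_add_mul_of_sq_eq hb hc hγ hw'
      _ = 2 := by norm_num
  have norm_eq' : Algebra.norm ℤ (1 + i * w) = 2 := by
    rw [← Algebra.coe_norm_int] at norm_eq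
    exact_mod_cast norm_eq
  rw [Ideal.absNorm_span_singleton, norm_eq']
  rfl

theorem isPrincipal_of_absNorm_le_four (hdeg : Module.finrank ℚ K = 4) {i w : 𝓞 K}
    (hi : i ^ 2 = -1) (hw : w ^ 2 = w - 2) {P : Ideal (𝓞 K)} (hP : P.IsPrime) (hP0 : P ≠ ⊥)
    (hle : P.absNorm ≤ 4) : P.IsPrincipal := by
  have isPrincipal_of_mem {v : 𝓞 K} (hv : v ^ 2 = v - 2) (hmem : 1 + i * v ∈ P) :
      P.IsPrincipal :=
    ⟨_, eq_span_singleton_of_mem_of_prime_absNorm hP.ne_top hmem <|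
      absNorm_span_one_add_mul hdeg hi hv ▸ Nat.prime_two⟩
  have two_mem : 2 ∈ P := two_mem_of_absNorm_le_four hi (hP.isMaximal hP0) hP0 hle
  obtain hmem | hmem := one_add_mul_mem_of_two_mem hi hw hP two_mem
  · exact isPrincipal_of_mem hw hmem
  · exact isPrincipal_of_mem (by linear_combination hw) hmem

end NumberField

open Nat Real in
theorem minkowski_bound_lt_five :
    (4 / π) ^ (4 / 2) * (4 ! / (4 : ℕ) ^ 4 * √(784 : ℝ)) < (4 : ℕ) + 1 := by
  have sqrt_eq : √(784 : ℝ) = 28 := by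
    rw [Real.sqrt_eq_iff_mul_self_eq] <;> norm_num
  calc
    (4 / π) ^ (4 / 2) * (4 ! / (4 : ℕ) ^ 4 * √(784 : ℝ))
        ≤ (4 / 3) ^ (4 / 2) * (4 ! / (4 : ℕ) ^ 4 * √(784 : ℝ)) := by
      gcongr
      exact pi_gt_three.le
    _ < (4 : ℕ) + (1 : ℝ) := by norm_num [sqrt_eq, factorial]

end BiquadraticField

/-- The class number of `ℚ(i, √7)`, the degree-4 field obtained by adjoining a primitive
4th root of unity and a square root of 7, is 1. -/
theorem classNumber_Q_i_sqrt_seven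
    (K : Type) [Field K] [NumberField K] (hdeg : Module.finrank ℚ K = 4)
    (hi : ∃ α : K, α ^ 2 = -1) (h7 : ∃ β : K, β ^ 2 = 7) :
    NumberField.classNumber K = 1 := by
  obtain ⟨α, hα⟩ := hi
  obtain ⟨β, hβ⟩ := h7
  obtain ⟨ω, hω⟩ : ∃ ω : K, ω ^ 2 = ω - 2 :=
    ⟨(1 + α * β) / 2, by linear_combination (β ^ 2 / 4) * hα - hβ / 4⟩
  obtain ⟨i, rfl⟩ : ∃ i : 𝓞 K, (i : K) = α :=
    ⟨⟨α, BiquadraticField.isIntegral_of_sq_eq (t := 0) (n := 1) (by simpa using hα)⟩, rfl⟩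
  obtain ⟨w, rfl⟩ : ∃ w : 𝓞 K, (w : K) = ω :=
    ⟨⟨ω, BiquadraticField.isIntegral_of_sq_eq (t := 1) (n := 2) (by simpa using hω)⟩, rfl⟩
  have hi : i ^ 2 = -1 := RingOfIntegers.ext (by simpa using hα)
  have hw : w ^ 2 = w - 2 :=
    RingOfIntegers.ext (by simpa only [map_pow, map_sub, map_ofNat] using hω)
  rw [classNumber_eq_one_iff]
  have discr_le : |(discr K : ℝ)| ≤ 784 := by
    exact_mod_cast BiquadraticField.abs_discr_le hdeg hα hω
  exact BiquadraticField.isPrincipalIdealRing_of_abs_discr_le hdeg discr_le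
    BiquadraticField.minkowski_bound_lt_five fun _ =>
      BiquadraticField.isPrincipal_of_absNorm_le_four hdeg hi hw
end

section
/- Let E = ℚ(ζ_3, ∛5) be the splitting field over ℚ of the polynomial x³ − 5, a number field of degree 6 over ℚ. Then the absolute value of the discriminant of E over ℚ equals 3⁷ · 5⁴. -/
open NumberField Polynomial

/-!
Let `K = ℚ(ρ)` with `ρ ^ p = m`, where `m` is squarefree and `p ^ 2 ∤ m ^ p - m`. The polynomial
`X ^ p - m` is Eisenstein at the primes dividing `m` and, after the shift `X ↦ X + m`, at `p`.
Hence `𝓞 K = ℤ[ρ]` and `|d_K| = p ^ p * |m| ^ (p - 1)`, and `p` is totally ramified in `K`, say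
`(p) = P ^ p`. In `L = K(ζ)`, with `ζ` a primitive `p`-th root of unity, also
`(p) = (ζ - 1) ^ (p - 1)`; as `p` and `p - 1` are coprime, unique factorization of ideals gives
`P = 𝔓 ^ (p - 1)` in `𝓞 L`, with `𝔓` of norm `p`, so `L / K` is tamely ramified at `𝔓`.
The different of `L / K` contains `p`, a unit multiple of the derivative of `X ^ p - 1` at `ζ`,
hence it is a power of `𝔓`, and tameness makes it `𝔓 ^ (p - 2)`. The tower formula then gives `d_L`.
-/

theorem exists_eq_pow_of_pow_eq_pow_of_coprime {M : Type*} [CommMonoidWithZero M]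
    [UniqueFactorizationMonoid M] {a b : M} (ha : a ≠ 0) (hb : b ≠ 0) {k n : ℕ}
    (h : a ^ k = b ^ n) (hkn : k.Coprime n) : ∃ c, a = c ^ n ∧ b = c ^ k := by
  obtain rfl | hk := eq_or_ne k 0
  · obtain rfl : n = 1 := by simpa using hkn
    exact ⟨a, (pow_one a).symm, by simpa using h.symm⟩
  obtain rfl | hn := eq_or_ne n 0
  · obtain rfl : k = 1 := by simpa using hkn
    exact ⟨b, by simpa using h, (pow_one b).symm⟩
  obtain ⟨j, rfl⟩ | ⟨j, rfl⟩ := (le_total n k).imp Nat.exists_eq_add_of_le Nat.exists_eq_add_of_le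
  · obtain ⟨c, rfl⟩ : a ∣ b := (UniqueFactorizationMonoid.pow_dvd_pow_iff_dvd hn).1
      ⟨a ^ j, by rw [← h, pow_add]⟩
    have hj : a ^ j = c ^ n := mul_left_cancel₀ (pow_ne_zero n ha) (by rw [← pow_add, h, mul_pow])
    obtain ⟨d, rfl, rfl⟩ := exists_eq_pow_of_pow_eq_pow_of_coprime ha (right_ne_zero_of_mul hb) hj
      (by simpa using hkn)
    exact ⟨d, rfl, (pow_add d n j).symm⟩
  · obtain ⟨c, rfl⟩ : b ∣ a := (UniqueFactorizationMonoid.pow_dvd_pow_iff_dvd hk).1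
      ⟨b ^ j, by rw [h, pow_add]⟩
    have hj : c ^ k = b ^ j := mul_left_cancel₀ (pow_ne_zero k hb) (by rw [← pow_add, ← h, mul_pow])
    obtain ⟨d, rfl, rfl⟩ := exists_eq_pow_of_pow_eq_pow_of_coprime (right_ne_zero_of_mul ha) hb hj
      (by simpa using hkn)
    exact ⟨d, (pow_add d k j).symm, rfl⟩
termination_by k + n

theorem irreducible_comp_X_add_C_iff {R : Type*} [CommRing R] {f : R[X]} (a : R) :
    Irreducible (f.comp (X + C a)) ↔ Irreducible f :=
  MulEquiv.irreducible_iff (algEquivAevalXAddC a)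

theorem aeval_derivative_X_pow_sub_C {R S : Type*} [CommRing R] [CommRing S] [Algebra R S]
    (n : ℕ) (a : R) (x : S) : aeval x (derivative (X ^ n - C a)) = n * x ^ (n - 1) := by
  rw [derivative_sub, derivative_C, sub_zero, derivative_X_pow]
  simp

section Minpoly

variable {R S : Type*} [CommRing R] [IsDomain R] [IsIntegrallyClosed R] [CommRing S] [IsDomain S]
  [Algebra R S] [Module.IsTorsionFree R S]

theorem minpoly_eq_of_monic_of_irreducible {f : R[X]} (hf : f.Monic) (hirr : Irreducible f) {x : S}
    (hx : aeval x f = 0) : minpoly R x = f := by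
  have hint : IsIntegral R x := ⟨f, hf, hx⟩
  exact eq_of_monic_of_associated (minpoly.monic hint) hf <|
    (minpoly.irreducible hint).associated_of_dvd hirr (minpoly.isIntegrallyClosed_dvd hint hx)

theorem minpoly_sub_algebraMap {x : S} (hx : IsIntegral R x) (a : R) :
    minpoly R (x - algebraMap R S a) = (minpoly R x).comp (X + C a) :=
  minpoly_eq_of_monic_of_irreducible ((minpoly.monic hx).comp_X_add_C a)
    ((irreducible_comp_X_add_C_iff a).2 (minpoly.irreducible hx)) (by simp [aeval_comp])

end Minpoly

section Index

theorem adjoin_singleton_sub_algebraMap {R S : Type*} [CommRing R] [CommRing S] [Algebra R S]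
    (x : S) (a : R) :
    Algebra.adjoin R {x - algebraMap R S a} = Algebra.adjoin R {x} := by
  apply le_antisymm <;> apply Algebra.adjoin_singleton_le
  · exact sub_mem (Algebra.self_mem_adjoin_singleton R x) (algebraMap_mem _ a)
  · simpa using add_mem (Algebra.self_mem_adjoin_singleton R (x - algebraMap R S a))
      (algebraMap_mem _ a)

variable {R K L : Type*} [CommRing R] [IsDomain R] [Field K] [Field L] [Algebra K L] [Algebra R L]
  [Algebra R K] [IsScalarTower R K L] [IsFractionRing R K] {x z : L}

theorem mem_adjoin_of_prime_smul_of_isEisensteinAt_comp [IsIntegrallyClosed R]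
    (hx : IsIntegral R x) (htop : Algebra.adjoin K {x} = ⊤) {q : R} (hq : Prime q) {a : R}
    (hE : ((minpoly R x).comp (X + C a)).IsEisensteinAt (Ideal.span {q}))
    (hz : IsIntegral R z) (hqz : q • z ∈ Algebra.adjoin R {x}) : z ∈ Algebra.adjoin R {x} := by
  have : Module.IsTorsionFree R L := .trans_faithfulSMul R K L
  have hxa : IsIntegral R (x - algebraMap R L a) := hx.sub isIntegral_algebraMap
  have htopa : Algebra.adjoin K {x - algebraMap R L a} = ⊤ := by
    rw [IsScalarTower.algebraMap_apply R K L, adjoin_singleton_sub_algebraMap, htop]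
  let B := PowerBasis.ofAdjoinEqTop (hxa.tower_top (A := K)) htopa
  have hB : B.gen = x - algebraMap R L a := PowerBasis.ofAdjoinEqTop_gen _ _
  rw [← adjoin_singleton_sub_algebraMap x a, ← hB] at hqz ⊢
  refine mem_adjoin_of_smul_prime_smul_of_minpoly_isEisensteinAt (K := K) hq (hB ▸ hxa) hz hqz ?_
  rwa [hB, minpoly_sub_algebraMap hx]

variable [UniqueFactorizationMonoid R]

theorem mem_adjoin_of_smul_of_isEisensteinAt_comp
    (hx : IsIntegral R x) (htop : Algebra.adjoin K {x} = ⊤) {N : R} (hN : N ≠ 0)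
    (hE : ∀ q, Prime q → q ∣ N →
      ∃ a, ((minpoly R x).comp (X + C a)).IsEisensteinAt (Ideal.span {q}))
    (hz : IsIntegral R z) (hNz : N • z ∈ Algebra.adjoin R {x}) : z ∈ Algebra.adjoin R {x} := by
  induction N using UniqueFactorizationMonoid.induction_on_prime with
  | h₁ => exact absurd rfl hN
  | h₂ u hu =>
    obtain ⟨v, hv⟩ := hu.exists_left_inv
    simpa only [smul_smul, hv, one_smul] using Subalgebra.smul_mem _ hNz v
  | h₃ N q hN' hq ih =>
    obtain ⟨a, ha⟩ := hE q hq (dvd_mul_right q N)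
    refine ih hN' (fun p hp hpN => hE p hp (hpN.mul_left q)) ?_
    exact mem_adjoin_of_prime_smul_of_isEisensteinAt_comp hx htop hq ha (hz.smul N)
      (by rwa [smul_smul])

theorem adjoin_eq_top_of_isEisensteinAt_comp {B : Type*} [CommRing B] [Algebra R B] [Algebra B L]
    [IsScalarTower R B L] [IsIntegralClosure B R L] {x : B}
    (htop : Algebra.adjoin K {algebraMap B L x} = ⊤) {N : R} (hN : N ≠ 0)
    (hNx : algebraMap R B N ∈ conductor R x)
    (hE : ∀ q, Prime q → q ∣ N →
      ∃ a, ((minpoly R x).comp (X + C a)).IsEisensteinAt (Ideal.span {q})) :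
    Algebra.adjoin R {x} = ⊤ := by
  have hinj : Function.Injective (algebraMap B L) := IsIntegralClosure.algebraMap_injective B R L
  have hadj : Algebra.adjoin R {algebraMap B L x} =
      (Algebra.adjoin R {x}).map (IsScalarTower.toAlgHom R B L) := by
    simp [AlgHom.map_adjoin]
  have hmem (z : B) : algebraMap B L z ∈ Algebra.adjoin R {algebraMap B L x} ↔
      z ∈ Algebra.adjoin R {x} := by
    rw [hadj]
    exact hinj.mem_set_image
  have hint (z : B) : IsIntegral R (algebraMap B L z) := IsIntegralClosure.isIntegral_iff.2 ⟨z, rfl⟩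
  refine eq_top_iff.2 fun z _ => (hmem z).1 ?_
  refine mem_adjoin_of_smul_of_isEisensteinAt_comp (hint x) htop hN ?_ (hint z) ?_
  · rwa [minpoly.algebraMap_eq hinj]
  · rw [Algebra.smul_def, IsScalarTower.algebraMap_apply R B L, ← map_mul, hmem]
    exact mem_conductor_iff.1 hNx z

end Index

theorem isEisensteinAt_X_pow_sub_C {R : Type*} [CommRing R] [IsDomain R] {n : ℕ} (hn : n ≠ 0)
    {q a : R} (hq : Prime q) (hqa : q ∣ a) (hq2a : ¬ q ^ 2 ∣ a) :
    (X ^ n - C a : R[X]).IsEisensteinAt (Ideal.span {q}) := by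
  refine (monic_X_pow_sub_C a hn).isEisensteinAt_of_mem_of_notMem ?_ (fun {k} hk => ?_) ?_
  · simpa [Ideal.span_singleton_eq_top] using hq.not_isUnit
  · rw [natDegree_X_pow_sub_C] at hk
    rw [Ideal.mem_span_singleton, coeff_sub, coeff_X_pow, if_neg hk.ne, zero_sub, dvd_neg, coeff_C]
    split_ifs
    exacts [hqa, dvd_zero q]
  · simpa [Ideal.span_singleton_pow, Ideal.mem_span_singleton, coeff_X_pow, hn.symm] using hq2a

theorem isEisensteinAt_X_pow_sub_C_comp_X_add_C {p : ℕ} (hp : p.Prime) {m : ℤ}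
    (hm : ¬ (p : ℤ) ^ 2 ∣ m ^ p - m) :
    ((X ^ p - C m).comp (X + C m) : ℤ[X]).IsEisensteinAt (Ideal.span {(p : ℤ)}) := by
  have := Fact.mk hp
  have hdvd : (p : ℤ) ∣ m ^ p - m := by
    simp [← ZMod.intCast_zmod_eq_zero_iff_dvd]
  refine ((monic_X_pow_sub_C m hp.ne_zero).comp_X_add_C m).isEisensteinAt_of_mem_of_notMem ?_
    (fun {k} hk => ?_) ?_
  · rw [Ne, Ideal.span_singleton_eq_top]
    exact (Nat.prime_iff_prime_int.1 hp).not_isUnit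
  · rw [natDegree_comp, natDegree_X_pow_sub_C, natDegree_X_add_C, mul_one] at hk
    simp only [sub_comp, pow_comp, X_comp, C_comp, coeff_sub, coeff_X_add_C_pow, coeff_C,
      Ideal.mem_span_singleton]
    split_ifs with h
    · simpa [h] using hdvd
    · simpa using ((Int.natCast_dvd_natCast.2 (hp.dvd_choose_self h hk)).mul_left (m ^ (p - k)))
  · simpa [Ideal.span_singleton_pow, Ideal.mem_span_singleton, coeff_zero_eq_eval_zero] using hm

theorem irreducible_X_pow_sub_C_of_not_sq_dvd {p : ℕ} (hp : p.Prime) {m : ℤ}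
    (hm : ¬ (p : ℤ) ^ 2 ∣ m ^ p - m) : Irreducible (X ^ p - C m : ℤ[X]) := by
  have hmonic := (monic_X_pow_sub_C m hp.ne_zero).comp_X_add_C m
  refine (irreducible_comp_X_add_C_iff m).1 <|
    (isEisensteinAt_X_pow_sub_C_comp_X_add_C hp hm).irreducible
    ((Ideal.span_singleton_prime (by exact_mod_cast hp.ne_zero)).2 (Nat.prime_iff_prime_int.1 hp))
    hmonic.isPrimitive ?_
  rw [natDegree_comp, natDegree_X_pow_sub_C, natDegree_X_add_C, mul_one]
  exact hp.pos

section TotallyRamified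

theorem span_pair_pow_eq_span_of_isCoprime {S : Type*} [CommRing S] {q y v : S} {n : ℕ}
    (h : y ^ n = q * v) (hv : IsCoprime (Ideal.span {q, y}) (Ideal.span {v})) :
    Ideal.span {q, y} ^ n = Ideal.span {q} := by
  apply le_antisymm
  · rw [← (Ideal.span {q}).mk_ker, ← Ideal.map_eq_bot_iff_le_ker, Ideal.map_pow, Ideal.map_span,
      Set.image_pair, Ideal.Quotient.mk_singleton_self, Ideal.span_insert_zero,
      Ideal.span_singleton_pow, Ideal.span_singleton_eq_bot, ← map_pow, h, map_mul,
      Ideal.Quotient.mk_singleton_self, zero_mul]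
  · rw [Ideal.span_singleton_le_iff_mem]
    obtain ⟨i, hi, j, hj, hij⟩ := Ideal.isCoprime_iff_exists.1 (hv.pow_left (m := n))
    obtain ⟨s, rfl⟩ := Ideal.mem_span_singleton.1 hj
    have hy : y ^ n ∈ Ideal.span {q, y} ^ n :=
      Ideal.pow_mem_pow (Ideal.mem_span_pair.2 ⟨0, 1, by simp⟩) n
    have hq : i * q + y ^ n * s = q := by linear_combination q * hij + s * h
    simpa only [hq] using add_mem (Ideal.mul_mem_right q _ hi) (Ideal.mul_mem_right s _ hy)

variable {R : Type*} [CommRing R] {q : R} {f : R[X]}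

theorem exists_eq_X_pow_add_C_mul_of_isEisensteinAt (hf : f.Monic) (hn : f.natDegree ≠ 0)
    (hE : f.IsEisensteinAt (Ideal.span {q})) :
    ∃ g : R[X], f = X ^ f.natDegree + C q * g ∧ g.coeff 0 ∉ Ideal.span {q} := by
  obtain ⟨g, hg⟩ : C q ∣ f - X ^ f.natDegree := by
    refine (C_dvd_iff_dvd_coeff q _).2 fun k => ?_
    rw [← Ideal.mem_span_singleton, coeff_sub, coeff_X_pow]
    split_ifs with hk
    · simp [hk, hf.coeff_natDegree]
    · rw [sub_zero]
      exact (lt_or_gt_of_ne hk).elim hE.mem fun h => by simp [coeff_eq_zero_of_natDegree_lt h]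
  have hf0 : f.coeff 0 = q * g.coeff 0 := by
    simpa [coeff_X_pow, hn.symm] using congrArg (coeff · 0) hg
  refine ⟨g, eq_add_of_sub_eq' hg, fun hmem => hE.notMem ?_⟩
  rw [hf0, sq]
  exact Ideal.mul_mem_mul (Ideal.mem_span_singleton_self q) hmem

theorem span_pair_pow_natDegree_of_isEisensteinAt {S : Type*} [CommRing S] [Algebra R S]
    (hq : (Ideal.span {q}).IsMaximal) (hf : f.Monic) (hn : f.natDegree ≠ 0)
    (hE : f.IsEisensteinAt (Ideal.span {q})) {y : S} (hy : aeval y f = 0) :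
    Ideal.span {algebraMap R S q, y} ^ f.natDegree = Ideal.span {algebraMap R S q} := by
  obtain ⟨g, hfg, hg0⟩ := exists_eq_X_pow_add_C_mul_of_isEisensteinAt hf hn hE
  have hpow : y ^ f.natDegree = algebraMap R S q * -aeval y g := by
    have : y ^ f.natDegree + algebraMap R S q * aeval y g = 0 := by
      simpa [hy] using (congrArg (aeval y) hfg).symm
    linear_combination this
  have hgy : aeval y g = aeval y g.divX * y + algebraMap R S (g.coeff 0) := by
    simpa using congrArg (aeval y) g.divX_mul_X_add.symm
  obtain ⟨a, b, hb, hab⟩ := hq.exists_inv hg0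
  obtain ⟨c, rfl⟩ := Ideal.mem_span_singleton.1 hb
  have hunit := congrArg (algebraMap R S) hab
  simp only [map_add, map_mul, map_one] at hunit
  refine span_pair_pow_eq_span_of_isCoprime hpow <| Ideal.isCoprime_iff_exists.2
    ⟨_, Ideal.mem_span_pair.2 ⟨algebraMap R S c, -(algebraMap R S a * aeval y g.divX), rfl⟩,
      _, Ideal.mem_span_singleton.2 ⟨-algebraMap R S a, rfl⟩, ?_⟩
  linear_combination hunit + algebraMap R S a * hgy

end TotallyRamified

theorem exists_pow_eq_span_of_pow_eq {p : ℕ} (hp : p.Prime) {m : ℤ}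
    (hm : ¬ (p : ℤ) ^ 2 ∣ m ^ p - m) {S : Type*} [CommRing S] {r : S} (hr : r ^ p = m) :
    ∃ P : Ideal S, P ^ p = Ideal.span {(p : S)} := by
  have hpZ : Prime (p : ℤ) := Nat.prime_iff_prime_int.1 hp
  have hmax : (Ideal.span {(p : ℤ)}).IsMaximal :=
    PrincipalIdealRing.isMaximal_of_irreducible hpZ.irreducible
  have hdeg : ((X ^ p - C m).comp (X + C m)).natDegree = p := by
    rw [natDegree_comp, natDegree_X_pow_sub_C, natDegree_X_add_C, mul_one]
  have h := span_pair_pow_natDegree_of_isEisensteinAt hmax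
    ((monic_X_pow_sub_C m hp.ne_zero).comp_X_add_C m) (hdeg.trans_ne hp.ne_zero)
    (isEisensteinAt_X_pow_sub_C_comp_X_add_C hp hm) (y := r - m) (by simp [hr])
  rw [hdeg, algebraMap_int_eq, eq_intCast, Int.cast_natCast] at h
  exact ⟨_, h⟩

section RadicalField

variable {p : ℕ} {m : ℤ}

theorem minpoly_int_eq_X_pow_sub_C (hp : p.Prime) (hm : ¬ (p : ℤ) ^ 2 ∣ m ^ p - m) {S : Type*}
    [CommRing S] [IsDomain S] [CharZero S] {x : S} (hx : x ^ p = m) :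
    minpoly ℤ x = X ^ p - C m :=
  minpoly_eq_of_monic_of_irreducible (monic_X_pow_sub_C m hp.ne_zero)
    (irreducible_X_pow_sub_C_of_not_sq_dvd hp hm) (by simp [hx])

theorem natDegree_minpoly_rat_of_pow_eq (hp : p.Prime) (hm : ¬ (p : ℤ) ^ 2 ∣ m ^ p - m) {K : Type*}
    [Field K] [CharZero K] {x : K} (hx : x ^ p = m) :
    (minpoly ℚ x).natDegree = p := by
  have hint : IsIntegral ℤ x := .of_pow hp.pos (hx ▸ isIntegral_algebraMap)
  rw [minpoly.isIntegrallyClosed_eq_field_fractions' ℚ hint, (minpoly.monic hint).natDegree_map,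
    minpoly_int_eq_X_pow_sub_C hp hm hx, natDegree_X_pow_sub_C]

variable {K : Type*} [Field K] [NumberField K]

theorem adjoin_rat_eq_top_of_pow_eq (hp : p.Prime) (hm : ¬ (p : ℤ) ^ 2 ∣ m ^ p - m)
    (hK : Module.finrank ℚ K = p) {r : 𝓞 K} (hr : r ^ p = m) :
    Algebra.adjoin ℚ {(r : K)} = ⊤ := by
  have hrK : (r : K) ^ p = m := by rw [← map_pow, hr, map_intCast]
  exact Algebra.adjoin_eq_top_of_primitive_element (Algebra.IsAlgebraic.isAlgebraic _) <|
    (Field.primitive_element_iff_minpoly_natDegree_eq ℚ _).2 <|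
      (natDegree_minpoly_rat_of_pow_eq hp hm hrK).trans hK.symm

theorem absNorm_eq_natAbs_of_pow_eq_span {I : Ideal (𝓞 K)} {q : ℤ}
    (hI : I ^ Module.finrank ℚ K = Ideal.span {(q : 𝓞 K)}) : Ideal.absNorm I = q.natAbs := by
  have h := congrArg Ideal.absNorm hI
  rw [map_pow, Ideal.absNorm_span_singleton, ← eq_intCast (algebraMap ℤ (𝓞 K)),
    Algebra.norm_algebraMap, RingOfIntegers.rank, Int.natAbs_pow] at h
  exact Nat.pow_left_injective Module.finrank_pos.ne' h

theorem adjoin_int_eq_top_of_pow_eq (hp : p.Prime) (hsq : Squarefree m)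
    (hm : ¬ (p : ℤ) ^ 2 ∣ m ^ p - m) (hK : Module.finrank ℚ K = p) {r : 𝓞 K} (hr : r ^ p = m) :
    Algebra.adjoin ℤ {r} = ⊤ := by
  have htop := adjoin_rat_eq_top_of_pow_eq hp hm hK hr
  have hmin : minpoly ℤ r = X ^ p - C m := minpoly_int_eq_X_pow_sub_C hp hm hr
  have hmem : (p * r ^ (p - 1) : 𝓞 K) ∈ conductor ℤ r := by
    refine Ideal.mul_le_right (I := differentIdeal ℤ (𝓞 K)) ?_
    rw [mul_comm, conductor_mul_differentIdeal ℤ ℚ K r htop, hmin,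
      aeval_derivative_X_pow_sub_C]
    exact Ideal.mem_span_singleton_self _
  refine adjoin_eq_top_of_isEisensteinAt_comp htop (N := p * m)
    (mul_ne_zero (by exact_mod_cast hp.ne_zero) hsq.ne_zero) ?_ fun q hq hqN => ?_
  · have hpm : algebraMap ℤ (𝓞 K) (p * m) = r * (p * r ^ (p - 1)) := by
      rw [map_mul, map_natCast, eq_intCast, ← hr, ← mul_pow_sub_one hp.ne_zero r, mul_left_comm]
    exact hpm ▸ Ideal.mul_mem_left _ r hmem
  · rw [hmin]
    obtain hqp | hqm := hq.dvd_or_dvd hqN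
    · have hassoc := hq.associated_of_dvd (Nat.prime_iff_prime_int.1 hp) hqp
      rw [Ideal.span_singleton_eq_span_singleton.2 hassoc]
      exact ⟨m, isEisensteinAt_X_pow_sub_C_comp_X_add_C hp hm⟩
    · refine ⟨0, ?_⟩
      rw [C_0, add_zero, comp_X]
      exact isEisensteinAt_X_pow_sub_C hp.ne_zero hq hqm fun h => hq.not_isUnit (hsq q (sq q ▸ h))

theorem natAbs_discr_of_pow_eq (hp : p.Prime) (hsq : Squarefree m)
    (hm : ¬ (p : ℤ) ^ 2 ∣ m ^ p - m) (hK : Module.finrank ℚ K = p) {r : 𝓞 K} (hr : r ^ p = m) :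
    (discr K).natAbs = p ^ p * m.natAbs ^ (p - 1) := by
  have hdiff := conductor_mul_differentIdeal ℤ ℚ K r (adjoin_rat_eq_top_of_pow_eq hp hm hK hr)
  rw [conductor_eq_top_of_adjoin_eq_top (adjoin_int_eq_top_of_pow_eq hp hsq hm hK hr),
    Ideal.top_mul, minpoly_int_eq_X_pow_sub_C hp hm hr, aeval_derivative_X_pow_sub_C] at hdiff
  have hnorm : Ideal.absNorm (Ideal.span {r}) = m.natAbs :=
    absNorm_eq_natAbs_of_pow_eq_span (by rw [hK, Ideal.span_singleton_pow, hr])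
  rw [← absNorm_differentIdeal K (𝓞 K), hdiff, ← Ideal.span_singleton_mul_span_singleton,
    ← Ideal.span_singleton_pow, map_mul, map_pow, Ideal.absNorm_span_natCast,
    RingOfIntegers.rank, hK, hnorm]

end RadicalField

theorem finrank_eq_totient_of_coprime_finrank_rat {K L : Type*} [Field K] [NumberField K] [Field L]
    [CharZero L] [Algebra K L] (n : ℕ) [NeZero n] [IsCyclotomicExtension {n} K L]
    (h : (Module.finrank ℚ K).Coprime n.totient) :
    Module.finrank K L = n.totient := by
  obtain ⟨ζ, hζ⟩ := IsCyclotomicExtension.exists_isPrimitiveRoot K L (Set.mem_singleton n)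
    (NeZero.ne n)
  have : FiniteDimensional K L := IsCyclotomicExtension.finiteDimensional {n} K L
  have : NumberField L := NumberField.of_module_finite K L
  have hle : Module.finrank K L ≤ n.totient := by
    rw [(hζ.powerBasis K).finrank, IsPrimitiveRoot.powerBasis_dim, ← natDegree_cyclotomic n K]
    refine natDegree_le_of_dvd (minpoly.dvd K ζ ?_) (cyclotomic_ne_zero n K)
    rw [aeval_def, ← eval_map, map_cyclotomic]
    exact hζ.isRoot_cyclotomic (NeZero.pos n)
  have hdvd : n.totient ∣ Module.finrank ℚ K * Module.finrank K L := by
    rw [Module.finrank_mul_finrank, ← natDegree_cyclotomic n ℚ,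
      cyclotomic_eq_minpoly_rat hζ (NeZero.pos n)]
    exact minpoly.degree_dvd (Algebra.IsIntegral.isIntegral ζ)
  exact le_antisymm hle (Nat.le_of_dvd Module.finrank_pos (h.symm.dvd_of_dvd_mul_left hdvd))

section Different

variable (A K L : Type*) {B : Type*} [CommRing A] [IsDomain A] [IsIntegrallyClosed A]
  [Field K] [CommRing B] [Field L] [Algebra A K] [Algebra B L] [Algebra A B] [Algebra K L]
  [Algebra A L] [IsScalarTower A K L] [IsScalarTower A B L] [IsFractionRing A K]
  [FiniteDimensional K L] [Algebra.IsSeparable K L] [IsIntegralClosure B A L]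
  [IsDedekindDomain B] [Module.IsTorsionFree A B]

theorem aeval_derivative_mem_differentIdeal_of_aeval_eq_zero {x : B}
    (hx : Algebra.adjoin K {algebraMap B L x} = ⊤) {f : A[X]} (hf : aeval x f = 0) :
    aeval x (derivative f) ∈ differentIdeal A B := by
  have hint : IsIntegral A x := IsIntegralClosure.isIntegral A L x
  obtain ⟨g, rfl⟩ := minpoly.isIntegrallyClosed_dvd hint hf
  rw [derivative_mul, map_add, map_mul, map_mul, minpoly.aeval, zero_mul, add_zero]
  exact Ideal.mul_mem_right _ _ (aeval_derivative_mem_differentIdeal A K L x hx)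

theorem natCast_mem_differentIdeal_of_isPrimitiveRoot {n : ℕ} [NeZero n]
    [IsCyclotomicExtension {n} K L] {ζ : B}
    (hζ : IsPrimitiveRoot ζ n) : (n : B) ∈ differentIdeal A B := by
  have hζL : IsPrimitiveRoot (algebraMap B L ζ) n :=
    hζ.map_of_injective (IsIntegralClosure.algebraMap_injective B A L)
  have h := aeval_derivative_mem_differentIdeal_of_aeval_eq_zero A K L
    (IsCyclotomicExtension.adjoin_primitive_root_eq_top hζL)
    (f := X ^ n - C 1) (by simp [hζ.pow_eq_one])
  rw [aeval_derivative_X_pow_sub_C] at h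
  exact (Ideal.mul_unit_mem_iff_mem _ ((hζ.isUnit (NeZero.ne n)).pow _)).1 h

end Different

section RelativeDifferent

variable {K L : Type*} [Field K] [NumberField K] [Field L] [NumberField L] [Algebra K L]

theorem intTrace_one_ringOfIntegers :
    Algebra.intTrace (𝓞 K) (𝓞 L) 1 = Module.finrank K L := by
  apply RingOfIntegers.coe_injective
  rw [Algebra.algebraMap_intTrace (L := L), map_one, ← map_one (algebraMap K L),
    Algebra.trace_algebraMap, nsmul_one, map_natCast]

theorem not_map_dvd_differentIdeal_of_finrank_notMem_s12 {P : Ideal (𝓞 K)}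
    (hP : (Module.finrank K L : 𝓞 K) ∉ P) :
    ¬ P.map (algebraMap (𝓞 K) (𝓞 L)) ∣ differentIdeal (𝓞 K) (𝓞 L) :=
  not_dvd_differentIdeal_of_intTrace_not_mem (𝓞 K) _ ⊤ (Ideal.mul_top _) 1 trivial
    (by rwa [intTrace_one_ringOfIntegers])

theorem prime_of_prime_absNorm {I : Ideal (𝓞 K)} (hI : (Ideal.absNorm I).Prime) : Prime I := by
  refine Ideal.prime_of_isPrime ?_ (Ideal.isPrime_of_irreducible_absNorm hI)
  rintro rfl
  exact Nat.not_prime_zero (Ideal.absNorm_bot (S := 𝓞 K) ▸ hI)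

theorem differentIdeal_eq_pow_of_pow_finrank_eq_map {P : Ideal (𝓞 K)} (hP : Prime P)
    {𝔓 : Ideal (𝓞 L)} (h𝔓 : Prime 𝔓)
    (hmap : 𝔓 ^ Module.finrank K L = P.map (algebraMap (𝓞 K) (𝓞 L)))
    (htame : (Module.finrank K L : 𝓞 K) ∉ P) {k : ℕ} (hk : differentIdeal (𝓞 K) (𝓞 L) ∣ 𝔓 ^ k) :
    differentIdeal (𝓞 K) (𝓞 L) = 𝔓 ^ (Module.finrank K L - 1) := by
  obtain ⟨j, -, hj⟩ := (dvd_prime_pow h𝔓 k).1 hk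
  rw [associated_iff_eq] at hj
  have hlower : Module.finrank K L - 1 ≤ j := by
    rw [← pow_dvd_pow_iff h𝔓.ne_zero h𝔓.not_isUnit, ← hj]
    have := (Ideal.isPrime_of_prime hP).isMaximal hP.ne_zero
    exact pow_sub_one_dvd_differentIdeal (𝓞 K) 𝔓 _ hP.ne_zero hmap.dvd
  have hupper : j < Module.finrank K L := by
    rw [← not_le, ← pow_dvd_pow_iff h𝔓.ne_zero h𝔓.not_isUnit, hmap, ← hj]
    exact not_map_dvd_differentIdeal_of_finrank_notMem_s12 htame
  rw [hj, le_antisymm (Nat.le_sub_one_of_lt hupper) hlower]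

variable {p : ℕ} [hp : Fact p.Prime] {P : Ideal (𝓞 K)}

theorem exists_pow_eq_map_of_isPrimitiveRoot (hK : (Module.finrank ℚ K).Coprime (p - 1))
    (hP : P ^ Module.finrank ℚ K = Ideal.span {(p : 𝓞 K)}) {ζ : L} (hζ : IsPrimitiveRoot ζ p) :
    ∃ 𝔓 : Ideal (𝓞 L), 𝔓 ^ (p - 1) = P.map (algebraMap (𝓞 K) (𝓞 L)) ∧
      𝔓 ^ (Module.finrank ℚ K * (p - 1)) = Ideal.span {(p : 𝓞 L)} := by
  have hp0 : Ideal.span {(p : 𝓞 L)} ≠ 0 := by simp [hp.out.ne_zero]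
  have hζspan : Ideal.span {hζ.toInteger - 1} ^ (p - 1) = Ideal.span {(p : 𝓞 L)} := by
    rw [Ideal.span_singleton_pow, Ideal.span_singleton_eq_span_singleton]
    exact IsCyclotomicExtension.Rat.associated_zeta_sub_one_pow_prime p hζ
  have hPspan : P.map (algebraMap (𝓞 K) (𝓞 L)) ^ Module.finrank ℚ K = Ideal.span {(p : 𝓞 L)} := by
    rw [← Ideal.map_pow, hP, Ideal.map_span, Set.image_singleton, map_natCast]
  obtain ⟨𝔓, hP𝔓, hζ𝔓⟩ := exists_eq_pow_of_pow_eq_pow_of_coprime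
    (ne_zero_pow Module.finrank_pos.ne' (hPspan ▸ hp0))
    (ne_zero_pow (Nat.sub_ne_zero_of_lt hp.out.one_lt) (hζspan ▸ hp0)) (hPspan.trans hζspan.symm) hK
  exact ⟨𝔓, hP𝔓.symm, by rw [pow_mul, ← hζ𝔓, hζspan]⟩

theorem absNorm_differentIdeal_of_isCyclotomicExtension [IsCyclotomicExtension {p} K L]
    (hK : (Module.finrank ℚ K).Coprime (p - 1))
    (hP : P ^ Module.finrank ℚ K = Ideal.span {(p : 𝓞 K)}) :
    Ideal.absNorm (differentIdeal (𝓞 K) (𝓞 L)) = p ^ (p - 2) := by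
  obtain ⟨ζ, hζ⟩ := IsCyclotomicExtension.exists_isPrimitiveRoot K L (Set.mem_singleton p)
    hp.out.ne_zero
  obtain ⟨𝔓, hmap, h𝔓⟩ := exists_pow_eq_map_of_isPrimitiveRoot hK hP hζ
  have hKL : Module.finrank K L = p - 1 := by
    rw [← Nat.totient_prime hp.out] at hK ⊢
    exact finrank_eq_totient_of_coprime_finrank_rat p hK
  have hL : Module.finrank ℚ L = Module.finrank ℚ K * (p - 1) := by
    rw [← hKL, Module.finrank_mul_finrank]
  have hPnorm : Ideal.absNorm P = p :=
    absNorm_eq_natAbs_of_pow_eq_span (q := p) (by exact_mod_cast hP)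
  have h𝔓norm : Ideal.absNorm 𝔓 = p :=
    absNorm_eq_natAbs_of_pow_eq_span (q := p) (by rw [hL]; exact_mod_cast h𝔓)
  have hPprime : Prime P := prime_of_prime_absNorm (hPnorm ▸ hp.out)
  have hpP : (p : 𝓞 K) ∈ P := by simpa [hPnorm] using Ideal.absNorm_mem P
  have htame : ((p - 1 : ℕ) : 𝓞 K) ∉ P := fun h => hPprime.not_isUnit <|
    Ideal.isUnit_iff.2 <| P.eq_top_iff_one.2 <| by
      simpa [Nat.cast_pred hp.out.pos] using sub_mem hpP h
  have hdvd : differentIdeal (𝓞 K) (𝓞 L) ∣ 𝔓 ^ (Module.finrank ℚ K * (p - 1)) := by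
    rw [h𝔓, Ideal.dvd_span_singleton]
    exact natCast_mem_differentIdeal_of_isPrimitiveRoot (𝓞 K) K L hζ.toInteger_isPrimitiveRoot
  rw [differentIdeal_eq_pow_of_pow_finrank_eq_map hPprime
    (prime_of_prime_absNorm (h𝔓norm ▸ hp.out)) (hKL ▸ hmap) (hKL ▸ htame) hdvd, map_pow, h𝔓norm,
    hKL, Nat.sub_sub]

end RelativeDifferent

section SplittingField

open IntermediateField

theorem exists_isPrimitiveRoot_of_splits {F : Type*} [Field F] {n : ℕ} [NeZero (n : F)]
    (h : (X ^ n - 1 : F[X]).Splits) : ∃ ζ : F, IsPrimitiveRoot ζ n := by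
  have hn : 0 < n := (NeZero.of_neZero_natCast F (n := n)).pos
  have hsplits : (cyclotomic n F).Splits :=
    h.of_dvd (X_pow_sub_C_ne_zero hn (1 : F)) (cyclotomic.dvd_X_pow_sub_one n F)
  obtain ⟨ζ, hζ⟩ := hsplits.exists_eval_eq_zero (degree_cyclotomic_pos n F hn).ne'
  exact ⟨ζ, isRoot_cyclotomic_iff.1 hζ⟩

theorem isCyclotomicExtension_adjoin_simple_of_isSplittingField {F E : Type*} [Field F] [Field E]
    [Algebra F E] {n : ℕ} [NeZero (n : F)] {a : F} (ha : a ≠ 0)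
    [hE : IsSplittingField F E (X ^ n - C a)] {x : E} (hx : x ^ n = algebraMap F E a) :
    IsCyclotomicExtension {n} F⟮x⟯ E := by
  have : NeZero n := .of_neZero_natCast F
  have : NeZero (n : E) := .nat_of_injective (algebraMap F E).injective
  have hx0 : x ≠ 0 := by
    rw [← pow_ne_zero_iff (NeZero.ne n), hx]
    exact (_root_.map_ne_zero _).2 ha
  refine (IsCyclotomicExtension.iff_singleton n F⟮x⟯ E).2
    ⟨exists_isPrimitiveRoot_of_splits ?_, fun y => ?_⟩
  · simpa using splits_X_pow_sub_one_of_X_pow_sub_C (algebraMap F E) n ha hE.splits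
  · suffices h : Algebra.adjoin F ((X ^ n - C a).rootSet E) ≤
        (Algebra.adjoin F⟮x⟯ {b : E | b ^ n = 1}).restrictScalars F by
      exact h (hE.adjoin_rootSet ▸ Algebra.mem_top)
    refine Algebra.adjoin_le fun b hb => ?_
    have hb' : b ^ n = algebraMap F E a := by
      simpa [sub_eq_zero] using aeval_eq_zero_of_mem_rootSet hb
    have hroot : b / x ∈ {c : E | c ^ n = 1} := by
      rw [Set.mem_ofPred_eq, div_pow, hb', hx, div_self ((_root_.map_ne_zero _).2 ha)]
    have hmul := Subalgebra.smul_mem _ (Algebra.subset_adjoin (R := F⟮x⟯) hroot)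
      (AdjoinSimple.gen F x)
    rwa [Algebra.smul_def, AdjoinSimple.algebraMap_gen, mul_div_cancel₀ _ hx0] at hmul

end SplittingField

theorem natAbs_discr_of_isCyclotomicExtension_of_pow_eq {K L : Type*} [Field K] [NumberField K]
    [Field L] [NumberField L] [Algebra K L] {p : ℕ} [hp : Fact p.Prime]
    [IsCyclotomicExtension {p} K L] {m : ℤ} (hsq : Squarefree m) (hm : ¬ (p : ℤ) ^ 2 ∣ m ^ p - m)
    (hK : Module.finrank ℚ K = p) {x : K} (hx : x ^ p = m) :
    (discr L).natAbs = p ^ (p ^ 2 - 2) * m.natAbs ^ ((p - 1) ^ 2) := by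
  obtain ⟨r, rfl⟩ : ∃ r : 𝓞 K, (r : K) = x :=
    (IsIntegralClosure.isIntegral_iff (R := ℤ)).1
      (.of_pow hp.out.pos (hx ▸ isIntegral_algebraMap))
  have hr : r ^ p = m := RingOfIntegers.coe_injective (by rwa [map_pow, map_intCast])
  obtain ⟨P, hP⟩ := exists_pow_eq_span_of_pow_eq hp.out hm hr
  have hcop : (Module.finrank ℚ K).Coprime (p - 1) := by
    rw [hK, Nat.coprime_self_sub_right hp.out.one_le]
    exact Nat.coprime_one_right p
  have hKL : Module.finrank K L = p - 1 := by
    rw [← Nat.totient_prime hp.out] at hcop ⊢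
    exact finrank_eq_totient_of_coprime_finrank_rat p hcop
  rw [natAbs_discr_eq_absNorm_differentIdeal_mul_natAbs_discr_pow K (𝓞 K) L (𝓞 L),
    absNorm_differentIdeal_of_isCyclotomicExtension hcop (by rwa [hK]),
    natAbs_discr_of_pow_eq hp.out hsq hm hK hr, hKL]
  obtain ⟨k, rfl⟩ := Nat.exists_eq_add_of_le' hp.out.two_le
  rw [mul_pow, ← pow_mul, ← pow_mul, ← mul_assoc, ← pow_add, ← sq]
  congr 2
  grind

open IntermediateField in
theorem abs_discr_splittingField_cubic_five_general {E : Type*} [Field E] [NumberField E] {p : ℕ}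
    (hp : p.Prime) {m : ℤ} (hsq : Squarefree m) (hm : ¬ (p : ℤ) ^ 2 ∣ m ^ p - m)
    (hsplit : IsSplittingField ℚ E (X ^ p - C (m : ℚ))) :
    (discr E).natAbs = p ^ (p ^ 2 - 2) * m.natAbs ^ ((p - 1) ^ 2) := by
  have := Fact.mk hp
  obtain ⟨x, hx⟩ : ∃ x : E, x ^ p = m := by
    obtain ⟨x, hx⟩ := hsplit.splits.exists_eval_eq_zero (by
      rw [degree_map, degree_X_pow_sub_C hp.pos]
      exact_mod_cast hp.ne_zero)
    exact ⟨x, by simpa [sub_eq_zero] using hx⟩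
  have hK : Module.finrank ℚ ℚ⟮x⟯ = p := by
    rw [adjoin.finrank (Algebra.IsIntegral.isIntegral x), natDegree_minpoly_rat_of_pow_eq hp hm hx]
  have : IsCyclotomicExtension {p} ℚ⟮x⟯ E :=
    isCyclotomicExtension_adjoin_simple_of_isSplittingField
      (Int.cast_ne_zero.2 hsq.ne_zero) (by simpa using hx)
  exact natAbs_discr_of_isCyclotomicExtension_of_pow_eq hsq hm hK (x := AdjoinSimple.gen ℚ x)
    (Subtype.ext (by simpa using hx))

/-- The splitting field `E = ℚ(ζ₃, ∛5)` of `x³ − 5`, of degree 6 over `ℚ`,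
has absolute discriminant `3⁷ · 5⁴`. -/
theorem abs_discr_splittingField_cubic_five
    (E : Type) [Field E] [NumberField E]
    (hsplit : IsSplittingField ℚ E (X ^ 3 - C 5))
    (hdeg : Module.finrank ℚ E = 6) :
    (NumberField.discr E).natAbs = 3 ^ 7 * 5 ^ 4 :=
  abs_discr_splittingField_cubic_five_general Nat.prime_three (m := 5)
    (Nat.prime_iff_prime_int.1 Nat.prime_five).squarefree (by norm_num) (by exact_mod_cast hsplit)
end
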